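/- Assume f satisfies (f1), (f2), and (f4'): (F/f)'(s) ≥ (n−2)/2 for all s > β, and let α* ∈ G_k. Fix i ∈ {1,…,k−1}. Then there exists δ ∈ (0, δ₁) (δ₁ as in the δ₁-lemma) such that for all α₁ < α₂ in (α*−δ, α*+δ) the following holds. Let M_j and m_j be the i-th consecutive local maximum and minimum values of u_j := u(·,α_j) in [0, T_{k−1}(α*)+a], and let Q_j(s) := Q(s,α_j) along the decreasing branch of u_j joining these extrema. If M₁ < M₂ and Q₁(M₁) > Q₂(M₂), then m₁ > m₂ and Q₁(m₁) > Q₂(m₂). -/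

import Mathlib

open Set Filter MeasureTheory

namespace Paper

noncomputable section

/-- `F s = ∫₀ˢ f t dt`. -/
def Fint (f : ℝ → ℝ) (s : ℝ) : ℝ := ∫ t in (0:ℝ)..s, f t

/-- Hypothesis (f1): `f` is odd, `f 0 = 0`, there are `β > b > 0` with `f > 0` on `(b,∞)`,
`f ≤ 0`, `f ≢ 0` on `[0,b]`, and `F β = 0`. -/
def Hf1 (f : ℝ → ℝ) (b β : ℝ) : Prop :=
  (∀ s, f (-s) = -f s) ∧ f 0 = 0 ∧ 0 < b ∧ b < β ∧
    (∀ s, b < s → 0 < f s) ∧ (∀ s ∈ Icc (0:ℝ) b, f s ≤ 0) ∧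
    (∃ s ∈ Icc (0:ℝ) b, f s ≠ 0) ∧ Fint f β = 0

/-- Hypothesis (f2): `f` continuous on `[0,∞)`, C¹ on `(0,∞)`, `f' ∈ L¹(0,1)`. -/
def Hf2 (f : ℝ → ℝ) : Prop :=
  ContinuousOn f (Ici 0) ∧ (∀ s : ℝ, 0 < s → DifferentiableAt ℝ f s) ∧
    ContinuousOn (deriv f) (Ioi 0) ∧ IntegrableOn (deriv f) (Ioo 0 1)

/-- Hypothesis (f3): `f s ≥ f' s * (s - β)` for `s ≥ β`. -/
def Hf3 (f : ℝ → ℝ) (β : ℝ) : Prop := ∀ s, β ≤ s → deriv f s * (s - β) ≤ f s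

/-- Hypothesis (f4): `(F/f)' s ≥ (n-2)/(2n)` for `s > β`. -/
def Hf4 (n : ℕ) (f : ℝ → ℝ) (β : ℝ) : Prop :=
  ∀ s, β < s → ((n : ℝ) - 2) / (2 * (n : ℝ)) ≤ deriv (fun t => Fint f t / f t) s

/-- Hypothesis (f4'): `(F/f)' s ≥ (n-2)/2` for `s > β`. -/
def Hf4' (n : ℕ) (f : ℝ → ℝ) (β : ℝ) : Prop :=
  ∀ s, β < s → ((n : ℝ) - 2) / 2 ≤ deriv (fun t => Fint f t / f t) s

/-- Hypothesis (f5): `s ↦ s f' s / f s` is nonincreasing on `[β,∞)`. -/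
def Hf5 (f : ℝ → ℝ) (β : ℝ) : Prop := AntitoneOn (fun s => s * deriv f s / f s) (Ici β)

/-- Hypothesis (f6): `β f' β / f β ≤ n/(n-2)`. -/
def Hf6 (n : ℕ) (f : ℝ → ℝ) (β : ℝ) : Prop := β * deriv f β / f β ≤ (n : ℝ) / ((n : ℝ) - 2)

/-- Hypothesis (f1'): `f 0 = 0` and `s f s > 0` for `s > 0`. -/
def Hf1' (f : ℝ → ℝ) : Prop := f 0 = 0 ∧ ∀ s : ℝ, 0 < s → 0 < s * f s

/-- Hypothesis (f3'): `f s ≥ s f' s` for `s > 0`, with strict inequality at points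
arbitrarily close to `0`. -/
def Hf3' (f : ℝ → ℝ) : Prop :=
  (∀ s : ℝ, 0 < s → s * deriv f s ≤ f s) ∧
    ∀ ε : ℝ, 0 < ε → ∃ s ∈ Ioo (0:ℝ) ε, s * deriv f s < f s

/-- `v` is a C² solution of (E) on `(0,∞)`, continuous on `[0,∞)`,
with `v 0 = α` and `v' 0 = 0`. -/
def IVPsol (n : ℕ) (f : ℝ → ℝ) (α : ℝ) (v : ℝ → ℝ) : Prop :=
  v 0 = α ∧ deriv v 0 = 0 ∧ ContinuousOn v (Ici 0) ∧
    (∀ r : ℝ, 0 < r → DifferentiableAt ℝ v r ∧ DifferentiableAt ℝ (deriv v) r) ∧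
    (∀ r : ℝ, 0 < r → deriv (deriv v) r + ((n : ℝ) - 1) / r * deriv v r + f (v r) = 0)

/-- The family `α ↦ u α` of solutions of the IVP, with `u α r` and `u' α r`
continuous in `(α, r)`. -/
def Family (n : ℕ) (f : ℝ → ℝ) (u : ℝ → ℝ → ℝ) : Prop :=
  (∀ α : ℝ, 0 < α → IVPsol n f α (u α)) ∧
    ContinuousOn (fun p : ℝ × ℝ => u p.1 p.2) (Ioi 0 ×ˢ Ici 0) ∧
    ContinuousOn (fun p : ℝ × ℝ => deriv (u p.1) p.2) (Ioi 0 ×ˢ Ici 0)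

/-- The set whose supremum is `Z_k α`, given `T = T_{k-1} α`. -/
def ZsetAux (u : ℝ → ℝ → ℝ) (k : ℕ) (T α : ℝ) : Set ℝ :=
  {r | T < r ∧ ∀ s ∈ Ioo T r, (-1 : ℝ) ^ k * u α s < 0 ∧ 0 < (-1 : ℝ) ^ k * deriv (u α) s}

/-- The pair `(Z_k, T_k)`, with `T₀ = 0`;
`Z_k α = sup {r > T_{k-1} α | (-1)^k u < 0, (-1)^k u' > 0 on (T_{k-1} α, r)}` and
`T_k α = inf {r > Z_k α | u'(r, α) = 0}`. -/
def ZT (u : ℝ → ℝ → ℝ) : ℕ → (ℝ → ℝ) × (ℝ → ℝ)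
  | 0 => (fun _ => 0, fun _ => 0)
  | k + 1 =>
    let Z : ℝ → ℝ := fun α => sSup (ZsetAux u (k + 1) ((ZT u k).2 α) α)
    (Z, fun α => sInf {r | Z α < r ∧ deriv (u α) r = 0})

/-- `Z_k α` (as a real number; the genuine value when the defining set is bounded above). -/
def Zk (u : ℝ → ℝ → ℝ) (k : ℕ) (α : ℝ) : ℝ := (ZT u k).1 α

/-- `T_k α`, with `T₀ = 0`. -/
def Tk (u : ℝ → ℝ → ℝ) (k : ℕ) (α : ℝ) : ℝ := (ZT u k).2 α

/-- The defining set of `Z_k α`; `Z_k α = ∞` iff this set is unbounded above. -/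
def ZsetK (u : ℝ → ℝ → ℝ) (k : ℕ) (α : ℝ) : Set ℝ := ZsetAux u k (Tk u (k - 1) α) α

open Classical in
/-- The value of `u (·, α)` at `Z_k α`, as a limit `r → ∞` when `Z_k α = ∞`. -/
def uAtZ (u : ℝ → ℝ → ℝ) (k : ℕ) (α : ℝ) : ℝ :=
  if BddAbove (ZsetK u k α) then u α (Zk u k α) else limUnder atTop (u α)

open Classical in
/-- The value of `u' (·, α)` at `Z_k α`, as a limit `r → ∞` when `Z_k α = ∞`. -/
def duAtZ (u : ℝ → ℝ → ℝ) (k : ℕ) (α : ℝ) : ℝ :=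
  if BddAbove (ZsetK u k α) then deriv (u α) (Zk u k α) else limUnder atTop (deriv (u α))

open Classical in
/-- `Z_k α` as an extended real number. -/
def ZkE (u : ℝ → ℝ → ℝ) (k : ℕ) (α : ℝ) : WithTop ℝ :=
  if BddAbove (ZsetK u k α) then (Zk u k α : WithTop ℝ) else ⊤

/-- Membership in `F̃_k` (for `α ∈ N_{k-1}`): `(-1)^k u' (r, α) < 0` for all `r > Z_{k-1} α`. -/
def Ftil (u : ℝ → ℝ → ℝ) (k : ℕ) (α : ℝ) : Prop :=
  ∀ r, Zk u (k - 1) α < r → (-1 : ℝ) ^ k * deriv (u α) r < 0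

/-- The sets `N_k` (with `N₀ := (0,∞)`). -/
def Nk (u : ℝ → ℝ → ℝ) : ℕ → Set ℝ
  | 0 => Ioi 0
  | 1 => {α | 0 < α ∧ uAtZ u 1 α = 0 ∧ duAtZ u 1 α < 0}
  | k + 2 => {α | α ∈ Nk u (k + 1) ∧ ¬Ftil u (k + 2) α ∧ uAtZ u (k + 2) α = 0 ∧
      0 < (-1 : ℝ) ^ (k + 2) * duAtZ u (k + 2) α}

/-- The sets `G_k`. -/
def Gk (u : ℝ → ℝ → ℝ) : ℕ → Set ℝ
  | 0 => ∅
  | 1 => {α | 0 < α ∧ uAtZ u 1 α = 0 ∧ duAtZ u 1 α = 0}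
  | k + 2 => {α | α ∈ Nk u (k + 1) ∧ ¬Ftil u (k + 2) α ∧ uAtZ u (k + 2) α = 0 ∧
      duAtZ u (k + 2) α = 0}

/-- The set `F̃_k` (for `k ≥ 2`). -/
def FtilSet (u : ℝ → ℝ → ℝ) (k : ℕ) : Set ℝ := {α | α ∈ Nk u (k - 1) ∧ Ftil u k α}

/-- The set `F_k` (for `k ≥ 2`). -/
def Fk (u : ℝ → ℝ → ℝ) (k : ℕ) : Set ℝ :=
  {α | α ∈ Nk u (k - 1) ∧ ¬Ftil u k α ∧ (-1 : ℝ) ^ k * uAtZ u k α < 0}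

/-- The sets `P_k`. -/
def Pk (u : ℝ → ℝ → ℝ) : ℕ → Set ℝ
  | 0 => ∅
  | 1 => {α | 0 < α ∧ 0 < uAtZ u 1 α}
  | k + 2 => FtilSet u (k + 2) ∪ Fk u (k + 2)

/-- The set of extremal points (zeros of `u' (·, α)`) in `[0, A]`. -/
def ExtSet (u : ℝ → ℝ → ℝ) (α A : ℝ) : Set ℝ := {r | r ∈ Icc 0 A ∧ deriv (u α) r = 0}

/-- The conclusion of the δ₁-lemma (Lemma 4.1): every solution with initial value in
`(α*-δ₁, α*+δ₁)` has exactly `k` extremal points in `[0, T_{k-1}(α*) + a]`, with minimum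
values `< -β` and maximum values `> β`; moreover any two such solutions intersect between
any two of their consecutive extremal points, and in `(T_{k-1}(α*), Z_k(α*))`. -/
def DeltaOneLemma (f : ℝ → ℝ) (β : ℝ) (u : ℝ → ℝ → ℝ) (k : ℕ) (αs a δ₁ : ℝ) : Prop :=
  0 < a ∧ 0 < δ₁ ∧
    (∀ α ∈ Ioo (αs - δ₁) (αs + δ₁),
      (ExtSet u α (Tk u (k - 1) αs + a)).Finite ∧
        (ExtSet u α (Tk u (k - 1) αs + a)).ncard = k ∧
        ∀ r ∈ ExtSet u α (Tk u (k - 1) αs + a),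
          (IsLocalMin (u α) r → u α r < -β) ∧ (IsLocalMax (u α) r → β < u α r)) ∧
    ∀ α₁ ∈ Ioo (αs - δ₁) (αs + δ₁), ∀ α₂ ∈ Ioo (αs - δ₁) (αs + δ₁), α₁ < α₂ →
      (∀ i : ℕ, 1 ≤ i → i ≤ k - 1 →
        ∃ t, max (Tk u (i - 1) α₁) (Tk u (i - 1) α₂) < t ∧
          t < min (Tk u i α₁) (Tk u i α₂) ∧ u α₁ t = u α₂ t) ∧
      ∃ t, Tk u (k - 1) αs < t ∧ (BddAbove (ZsetK u k αs) → t < Zk u k αs) ∧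
        u α₁ t = u α₂ t

/-- `ρ` is the inverse of the monotone branch of `v` on `[t₁, t₂]`, whose set of values
is `[m, M]`. -/
def InvBranch (v ρ : ℝ → ℝ) (t₁ t₂ m M : ℝ) : Prop :=
  (∀ s ∈ Icc m M, ρ s ∈ Icc t₁ t₂ ∧ v (ρ s) = s) ∧
    ∀ s ∈ Ioo m M, HasDerivAt ρ (1 / deriv v (ρ s)) s

/-- `ρ` inverts a decreasing branch of `v` over the value interval `[m, M]`, along which
`(v')² + 2F > 0`. -/
def DecBranchInv (f : ℝ → ℝ) (v ρ : ℝ → ℝ) (m M : ℝ) : Prop :=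
  ∀ s ∈ Icc m M, 0 ≤ ρ s ∧ v (ρ s) = s ∧ deriv v (ρ s) < 0 ∧
    HasDerivAt ρ (1 / deriv v (ρ s)) s ∧ 0 < (deriv v (ρ s)) ^ 2 + 2 * Fint f s

/-- The functional `Q(s) = -4 (F/f)(s) r/r' - r²/(r')² - 2 r² F(s) + H(s)` computed along
the branch inverse `ρ`. -/
def Qfun (f H ρ : ℝ → ℝ) (s : ℝ) : ℝ :=
  -4 * (Fint f s / f s) * (ρ s / deriv ρ s) - (ρ s) ^ 2 / (deriv ρ s) ^ 2 -
    2 * (ρ s) ^ 2 * Fint f s + H s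

/-- The functional `P(s) = -2n (F/f)(s) r^{n-1}/r' - r^n/(r')² - 2 r^n F(s)`. -/
def Pfun (n : ℕ) (f : ℝ → ℝ) (ρ : ℝ → ℝ) (s : ℝ) : ℝ :=
  -(2 * (n : ℝ)) * (Fint f s / f s) * (ρ s ^ (n - 1) / deriv ρ s) -
    ρ s ^ n / (deriv ρ s) ^ 2 - 2 * ρ s ^ n * Fint f s

/-- The functional `W(s) = r(s) √((u'(r(s)))² + 2 F(s))`. -/
def Wfun (f v ρ : ℝ → ℝ) (s : ℝ) : ℝ :=
  ρ s * Real.sqrt ((deriv v (ρ s)) ^ 2 + 2 * Fint f s)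

/-- The functional `W̃(s) = r(s)^{n-1} √((u'(r(s)))² + 2 F(s))`. -/
def Wtil (n : ℕ) (f : ℝ → ℝ) (v ρ : ℝ → ℝ) (s : ℝ) : ℝ :=
  ρ s ^ (n - 1) * Real.sqrt ((deriv v (ρ s)) ^ 2 + 2 * Fint f s)

/-- `v` changes sign at `z ∈ (0,∞)`: `v z = 0` and `v` takes both signs in every
neighborhood of `z` (within `(0,∞)`). -/
def SignChange (v : ℝ → ℝ) (z : ℝ) : Prop :=
  v z = 0 ∧ ∀ ε : ℝ, 0 < ε →
    (∃ x ∈ Ioo (z - ε) (z + ε) ∩ Ioi 0, 0 < v x) ∧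
    (∃ x ∈ Ioo (z - ε) (z + ε) ∩ Ioi 0, v x < 0)

/-- `v` has exactly `m` sign changes in `(0,∞)`. -/
def ExactSignChanges (v : ℝ → ℝ) (m : ℕ) : Prop :=
  {z | 0 < z ∧ SignChange v z}.Finite ∧ {z | 0 < z ∧ SignChange v z}.ncard = m

/-- Bound state: a C² solution of (E) on `(0,∞)` with `v' 0 = 0` and `v r → 0` as `r → ∞`. -/
def BoundState (n : ℕ) (f : ℝ → ℝ) (v : ℝ → ℝ) : Prop :=
  ContinuousOn v (Ici 0) ∧
    (∀ r : ℝ, 0 < r → DifferentiableAt ℝ v r ∧ DifferentiableAt ℝ (deriv v) r) ∧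
    (∀ r : ℝ, 0 < r → deriv (deriv v) r + ((n : ℝ) - 1) / r * deriv v r + f (v r) = 0) ∧
    deriv v 0 = 0 ∧ Tendsto v atTop (nhds 0)

/-- Solution of the Dirichlet problem on the ball of radius `R`. -/
def DirichletSol (n : ℕ) (f : ℝ → ℝ) (R : ℝ) (v : ℝ → ℝ) : Prop :=
  ContinuousOn v (Icc 0 R) ∧
    (∀ r ∈ Ioo (0:ℝ) R, DifferentiableAt ℝ v r ∧ DifferentiableAt ℝ (deriv v) r) ∧
    (∀ r ∈ Ioo (0:ℝ) R, deriv (deriv v) r + ((n : ℝ) - 1) / r * deriv v r + f (v r) = 0) ∧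
    deriv v 0 = 0 ∧ v R = 0

end
end Paper

open Paper Set Filter MeasureTheory

/-! ### Sign changes of real functions -/

/-- A continuous function that is nonpositive at `c` and positive at `d` has a last zero. -/
lemma exists_last_zero {g : ℝ → ℝ} {c d : ℝ} (hcd : c ≤ d) (hg : ContinuousOn g (Icc c d))
    (hc : g c ≤ 0) (hd : 0 < g d) :
    ∃ x ∈ Ico c d, g x = 0 ∧ ∀ s ∈ Ioc x d, 0 < g s := by
  have hcl : IsCompact (Icc c d ∩ g ⁻¹' Iic 0) :=
    isCompact_Icc.of_isClosed_subset (hg.preimage_isClosed_of_isClosed isClosed_Icc isClosed_Iic)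
      inter_subset_left
  obtain ⟨x, ⟨hx, hgx⟩, hmax⟩ := hcl.exists_isGreatest ⟨c, ⟨le_refl c, hcd⟩, hc⟩
  have hgx' : g x ≤ 0 := hgx
  have hpos : ∀ s ∈ Ioc x d, 0 < g s := fun s hs => by
    by_contra hneg
    exact absurd (hmax ⟨⟨hx.1.trans hs.1.le, hs.2⟩, not_lt.1 hneg⟩) (not_le.2 hs.1)
  have hxd : x < d := lt_of_le_of_ne hx.2 (fun h => by rw [h] at hgx'; linarith)
  refine ⟨x, ⟨hx.1, hxd⟩, ?_, hpos⟩
  obtain ⟨y, hy, hy0⟩ := intermediate_value_Icc hx.2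
    (hg.mono (Icc_subset_Icc_left hx.1)) (show (0 : ℝ) ∈ Icc (g x) (g d) from ⟨hgx', hd.le⟩)
  rcases hy.1.eq_or_lt with h | h
  · rw [h]; exact hy0
  · exact absurd hy0 (hpos y ⟨h, hy.2⟩).ne'

/-- A continuous function that is positive at `c` and nonpositive at `d` has a first zero. -/
lemma exists_first_zero {g : ℝ → ℝ} {c d : ℝ} (hcd : c ≤ d) (hg : ContinuousOn g (Icc c d))
    (hc : 0 < g c) (hd : g d ≤ 0) :
    ∃ x ∈ Ioc c d, g x = 0 ∧ ∀ s ∈ Ico c x, 0 < g s := by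
  have hmaps : MapsTo (fun s : ℝ => -s) (Icc (-d) (-c)) (Icc c d) := fun s hs =>
    ⟨by linarith [hs.2], by linarith [hs.1]⟩
  obtain ⟨x, hx, hx0, hpos⟩ := exists_last_zero (g := fun s => g (-s)) (neg_le_neg hcd)
    (hg.comp continuous_neg.continuousOn hmaps) (by simpa using hd) (by simpa using hc)
  refine ⟨-x, ⟨by linarith [hx.2], by linarith [hx.1]⟩, hx0, fun s hs => ?_⟩
  simpa using hpos (-s) ⟨by linarith [hs.2], by linarith [hs.1]⟩

lemma deriv_nonneg_of_pos_right {g : ℝ → ℝ} {g' x d : ℝ} (hg : HasDerivAt g g' x) (hx : g x = 0)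
    (hxd : x < d) (hpos : ∀ s ∈ Ioo x d, 0 < g s) : 0 ≤ g' := by
  refine ge_of_tendsto ((hasDerivWithinAt_iff_tendsto_slope' (s := Ioi x) (by simp)).1
    hg.hasDerivWithinAt) ?_
  filter_upwards [Ioo_mem_nhdsGT hxd] with s hs
  rw [slope_def_field, hx, sub_zero]
  exact (div_pos (hpos s hs) (sub_pos.2 hs.1)).le

lemma deriv_nonpos_of_pos_left {g : ℝ → ℝ} {g' x c : ℝ} (hg : HasDerivAt g g' x) (hx : g x = 0)
    (hcx : c < x) (hpos : ∀ s ∈ Ioo c x, 0 < g s) : g' ≤ 0 := by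
  refine le_of_tendsto ((hasDerivWithinAt_iff_tendsto_slope' (s := Iio x) (by simp)).1
    hg.hasDerivWithinAt) ?_
  filter_upwards [Ioo_mem_nhdsLT hcx] with s hs
  rw [slope_def_field, hx, sub_zero]
  exact (div_neg_of_pos_of_neg (hpos s hs) (sub_neg.2 hs.2)).le

lemma le_of_hasDerivAt_nonneg {g : ℝ → ℝ} {c d : ℝ} (hcd : c ≤ d) (hg : ContinuousOn g (Icc c d))
    (h : ∀ s ∈ Ioo c d, ∃ g', HasDerivAt g g' s ∧ 0 ≤ g') : g c ≤ g d := by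
  refine monotoneOn_of_deriv_nonneg (convex_Icc c d) hg ?_ ?_ ⟨le_refl c, hcd⟩ ⟨hcd, le_refl d⟩ hcd
  all_goals
    rw [interior_Icc]
    intro s hs
    obtain ⟨g', hg', h0⟩ := h s hs
  · exact hg'.differentiableAt.differentiableWithinAt
  · rwa [hg'.deriv]

lemma lt_of_hasDerivAt_pos {g : ℝ → ℝ} {c d : ℝ} (hcd : c < d) (hg : ContinuousOn g (Icc c d))
    (h : ∀ s ∈ Ioo c d, ∃ g', HasDerivAt g g' s ∧ 0 < g') : g c < g d := by
  refine strictMonoOn_of_deriv_pos (convex_Icc c d) hg ?_ ⟨le_refl c, hcd.le⟩ ⟨hcd.le, le_refl d⟩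
    hcd
  rw [interior_Icc]
  intro s hs
  obtain ⟨g', hg', h0⟩ := h s hs
  rwa [hg'.deriv]

/-! ### The primitive of `f` -/

section Primitive

variable {n : ℕ} {f : ℝ → ℝ} {b β : ℝ}

lemma hasDerivAt_Fint (hf : Continuous f) (s : ℝ) : HasDerivAt (Fint f) (f s) s :=
  intervalIntegral.integral_hasDerivAt_right (hf.intervalIntegrable _ _)
    (hf.stronglyMeasurableAtFilter _ _) hf.continuousAt

lemma continuous_Fint (hf : Continuous f) : Continuous (Fint f) :=
  continuous_iff_continuousAt.2 fun s => (hasDerivAt_Fint hf s).continuousAt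

lemma Fint_zero : Fint f 0 = 0 := by simp [Fint]

lemma Fint_neg (h1 : Hf1 f b β) (s : ℝ) : Fint f (-s) = Fint f s := by
  have h := intervalIntegral.integral_comp_neg (a := 0) (b := s) f
  simp only [h1.1, intervalIntegral.integral_neg, neg_zero] at h
  rw [Fint, intervalIntegral.integral_symm, ← h, neg_neg, Fint]

lemma Fint_pos_of_lt (hf : Continuous f) (h1 : Hf1 f b β) {s : ℝ} (hs : β < s) :
    0 < Fint f s := by
  obtain ⟨-, -, -, hbβ, hpos, -, -, hFβ⟩ := h1
  rw [← hFβ]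
  exact lt_of_hasDerivAt_pos hs (continuous_Fint hf).continuousOn fun x hx =>
    ⟨f x, hasDerivAt_Fint hf x, hpos x (hbβ.trans hx.1)⟩

lemma Fint_pos_of_lt_neg (hf : Continuous f) (h1 : Hf1 f b β) {s : ℝ} (hs : s < -β) :
    0 < Fint f s := by
  rw [← Fint_neg h1]
  exact Fint_pos_of_lt hf h1 (by linarith)

lemma Fint_nonpos (hf : Continuous f) (h1 : Hf1 f b β) {s : ℝ} (hs : s ∈ Icc (-β) β) :
    Fint f s ≤ 0 := by
  have key : ∀ s ∈ Icc 0 β, Fint f s ≤ 0 := by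
    obtain ⟨-, -, -, hbβ, hpos, hneg, -, hFβ⟩ := h1
    intro s hs
    rcases le_total s b with h | h
    · have := le_of_hasDerivAt_nonneg (g := fun x => -Fint f x) hs.1
        (continuous_Fint hf).neg.continuousOn fun x hx =>
          ⟨-f x, (hasDerivAt_Fint hf x).neg, neg_nonneg.2 (hneg x ⟨hx.1.le, hx.2.le.trans h⟩)⟩
      simp only [Fint_zero, neg_zero] at this
      linarith
    · rw [← hFβ]
      exact le_of_hasDerivAt_nonneg hs.2 (continuous_Fint hf).continuousOn fun x hx =>
        ⟨f x, hasDerivAt_Fint hf x, (hpos x (h.trans_lt hx.1)).le⟩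
  rcases le_total 0 s with h | h
  · exact key s ⟨h, hs.2⟩
  · rw [← Fint_neg h1]
    exact key (-s) ⟨by linarith, by linarith [hs.1]⟩

lemma ratio_hasDerivAt (hf : Continuous f) (h1 : Hf1 f b β) (h2 : Hf2 f) (h4 : Hf4' n f β)
    {s : ℝ} (hs : β < s) :
    ∃ e, HasDerivAt (fun t => Fint f t / f t) e s ∧ ((n : ℝ) - 2) / 2 ≤ e := by
  refine ⟨_, DifferentiableAt.hasDerivAt ?_, h4 s hs⟩
  have hb : b < s := h1.2.2.2.1.trans hs
  exact (hasDerivAt_Fint hf s).differentiableAt.div (h2.2.1 s (h1.2.2.1.trans hb))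
    (h1.2.2.2.2.1 s hb).ne'

lemma ratio_hasDerivAt_neg (hf : Continuous f) (h1 : Hf1 f b β) (h2 : Hf2 f) (h4 : Hf4' n f β)
    {s : ℝ} (hs : s < -β) :
    ∃ e, HasDerivAt (fun t => Fint f t / f t) e s ∧ ((n : ℝ) - 2) / 2 ≤ e := by
  obtain ⟨e, he, hle⟩ := ratio_hasDerivAt hf h1 h2 h4 (s := -s) (by linarith)
  refine ⟨e, ?_, hle⟩
  have hodd : (fun t => Fint f t / f t) = fun t => -(Fint f (-t) / f (-t)) := by
    ext t
    rw [Fint_neg h1, h1.1, div_neg, neg_neg]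
  rw [hodd]
  exact ((he.comp s (hasDerivAt_neg s)).neg).congr_deriv (by ring)

lemma f_ne_zero (h1 : Hf1 f b β) {s : ℝ} (hs : β ≤ s) : f s ≠ 0 :=
  (h1.2.2.2.2.1 s (h1.2.2.2.1.trans_le hs)).ne'

lemma f_neg_of_le_neg (h1 : Hf1 f b β) {s : ℝ} (hs : s ≤ -β) : f s < 0 := by
  have := h1.2.2.2.2.1 (-s) (by linarith [h1.2.2.2.1])
  rw [h1.1] at this
  linarith

end Primitive

/-! ### Comparison of two decreasing branches -/

/-- A decreasing branch of a solution in inverse coordinates: `r s` is the radius at which the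
value `s ∈ [m, M]` is attained and `p s` is the derivative of the solution there. -/
structure Branch (n : ℕ) (f r p : ℝ → ℝ) (m M : ℝ) : Prop where
  cont_r : ContinuousOn r (Icc m M)
  cont_p : ContinuousOn p (Icc m M)
  r_nonneg : ∀ s ∈ Icc m M, 0 ≤ r s
  r_pos : ∀ s ∈ Ioo m M, 0 < r s
  p_neg : ∀ s ∈ Ioo m M, p s < 0
  p_left : p m = 0
  p_right : p M = 0
  hasDerivAt_r : ∀ s ∈ Ioo m M, HasDerivAt r (1 / p s) s
  hasDerivAt_p : ∀ s ∈ Ioo m M, HasDerivAt p (-((n : ℝ) - 1) / r s - f s / p s) s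
  energy_pos : ∀ s ∈ Ioo m M, 0 < p s ^ 2 + 2 * Fint f s

/-- The functional `Q` in terms of the radius and the slope of a branch. -/
noncomputable def Qred (f H r p : ℝ → ℝ) (s : ℝ) : ℝ :=
  -4 * (Fint f s / f s) * (r s * p s) - r s ^ 2 * p s ^ 2 - 2 * r s ^ 2 * Fint f s + H s

section Comparison

variable {n : ℕ} {f H : ℝ → ℝ} {b β : ℝ} {r p r₁ p₁ r₂ p₂ : ℝ → ℝ} {m M m₁ M₁ m₂ M₂ : ℝ}

lemma Branch.p_nonpos (B : Branch n f r p m M) {s : ℝ} (hs : s ∈ Icc m M) : p s ≤ 0 := by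
  rcases hs.1.eq_or_lt with h | h
  · rw [← h, B.p_left]
  rcases hs.2.eq_or_lt with h' | h'
  · rw [h', B.p_right]
  · exact (B.p_neg s ⟨h, h'⟩).le

lemma Branch.hasDerivAt_rp (B : Branch n f r p m M) {s : ℝ} (hs : s ∈ Ioo m M) :
    HasDerivAt (fun t => r t * p t) (-((n : ℝ) - 2) - r s * f s / p s) s := by
  have hp := (B.p_neg s hs).ne
  have hr := (B.r_pos s hs).ne'
  refine ((B.hasDerivAt_r s hs).mul (B.hasDerivAt_p s hs)).congr_deriv ?_
  field_simp
  ring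

lemma Branch.hasDerivAt_Qred (hf : Continuous f)
    (hH : ∀ s : ℝ, f s ≠ 0 → HasDerivAt H (-4 * ((n : ℝ) - 2) * (Fint f s / f s)) s)
    (B : Branch n f r p m M) {s e : ℝ} (hs : s ∈ Ioo m M) (hfs : f s ≠ 0)
    (he : HasDerivAt (fun t => Fint f t / f t) e s) :
    HasDerivAt (Qred f H r p) (r s * p s * (2 * ((n : ℝ) - 2) - 4 * e)) s := by
  have hp := (B.p_neg s hs).ne
  have hr := (B.r_pos s hs).ne'
  have h := ((((he.const_mul (-4)).mul (B.hasDerivAt_rp hs)).sub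
    (((B.hasDerivAt_r s hs).pow 2).mul ((B.hasDerivAt_p s hs).pow 2))).sub
    ((((B.hasDerivAt_r s hs).pow 2).const_mul 2).mul (hasDerivAt_Fint hf s))).add (hH s hfs)
  refine (HasDerivAt.congr_deriv (f := Qred f H r p) h ?_)
  simp only [Pi.pow_apply]
  field_simp
  ring

lemma Branch.continuousOn_rp (B : Branch n f r p m M) :
    ContinuousOn (fun s => r s * p s) (Icc m M) := B.cont_r.mul B.cont_p

lemma Branch.continuousOn_Qred (hf : Continuous f)
    (hH : ∀ s : ℝ, f s ≠ 0 → HasDerivAt H (-4 * ((n : ℝ) - 2) * (Fint f s / f s)) s)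
    (B : Branch n f r p m M) {c d : ℝ} (hc : m ≤ c) (hd : d ≤ M)
    (hne : ∀ s ∈ Icc c d, f s ≠ 0) : ContinuousOn (Qred f H r p) (Icc c d) := by
  have hsub : Icc c d ⊆ Icc m M := Icc_subset_Icc hc hd
  have hr := B.cont_r.mono hsub
  have hp := B.cont_p.mono hsub
  have hF : ContinuousOn (Fint f) (Icc c d) := (continuous_Fint hf).continuousOn
  have hHc : ContinuousOn H (Icc c d) := fun s hs =>
    (hH s (hne s hs)).continuousAt.continuousWithinAt
  have hq : ContinuousOn (fun s => Fint f s / f s) (Icc c d) := hF.div hf.continuousOn hne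
  exact ((((continuousOn_const.mul hq).mul (hr.mul hp)).sub ((hr.pow 2).mul (hp.pow 2))).sub
    ((continuousOn_const.mul (hr.pow 2)).mul hF)).add hHc

lemma Branch.Qred_le (hf : Continuous f)
    (hH : ∀ s : ℝ, f s ≠ 0 → HasDerivAt H (-4 * ((n : ℝ) - 2) * (Fint f s / f s)) s)
    (B : Branch n f r p m M) {c d : ℝ} (hc : m ≤ c) (hcd : c ≤ d) (hd : d ≤ M)
    (hne : ∀ s ∈ Icc c d, f s ≠ 0)
    (hder : ∀ s ∈ Ioo c d,
      ∃ e, HasDerivAt (fun t => Fint f t / f t) e s ∧ ((n : ℝ) - 2) / 2 ≤ e) :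
    Qred f H r p c ≤ Qred f H r p d := by
  refine le_of_hasDerivAt_nonneg hcd (B.continuousOn_Qred hf hH hc hd hne) fun s hs => ?_
  obtain ⟨e, he, hle⟩ := hder s hs
  have hs' : s ∈ Ioo m M := ⟨hc.trans_lt hs.1, hs.2.trans_le hd⟩
  refine ⟨_, B.hasDerivAt_Qred hf hH hs' (hne s ⟨hs.1.le, hs.2.le⟩) he, ?_⟩
  exact mul_nonneg_of_nonpos_of_nonpos
    (mul_nonpos_of_nonneg_of_nonpos (B.r_pos s hs').le (B.p_neg s hs').le) (by linarith)

/-- As long as `r₂ p₂ ≤ r₁ p₁`, the difference `Q₁ - Q₂` is nonincreasing in `s`. -/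
lemma Branch.Qred_sub_le (hf : Continuous f)
    (hH : ∀ s : ℝ, f s ≠ 0 → HasDerivAt H (-4 * ((n : ℝ) - 2) * (Fint f s / f s)) s)
    (B₁ : Branch n f r₁ p₁ m₁ M₁) (B₂ : Branch n f r₂ p₂ m₂ M₂) {c d : ℝ}
    (hc₁ : m₁ ≤ c) (hc₂ : m₂ ≤ c) (hcd : c ≤ d) (hd₁ : d ≤ M₁) (hd₂ : d ≤ M₂)
    (hne : ∀ s ∈ Icc c d, f s ≠ 0)
    (hder : ∀ s ∈ Ioo c d,
      ∃ e, HasDerivAt (fun t => Fint f t / f t) e s ∧ ((n : ℝ) - 2) / 2 ≤ e)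
    (hV : ∀ s ∈ Ioo c d, r₂ s * p₂ s ≤ r₁ s * p₁ s) :
    Qred f H r₁ p₁ d - Qred f H r₂ p₂ d ≤ Qred f H r₁ p₁ c - Qred f H r₂ p₂ c := by
  have key := le_of_hasDerivAt_nonneg (g := fun s => Qred f H r₂ p₂ s - Qred f H r₁ p₁ s) hcd
    ((B₂.continuousOn_Qred hf hH hc₂ hd₂ hne).sub (B₁.continuousOn_Qred hf hH hc₁ hd₁ hne))
    fun s hs => by
      obtain ⟨e, he, hle⟩ := hder s hs
      have hfs := hne s ⟨hs.1.le, hs.2.le⟩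
      refine ⟨_, (B₂.hasDerivAt_Qred hf hH ⟨hc₂.trans_lt hs.1, hs.2.trans_le hd₂⟩ hfs he).sub
        (B₁.hasDerivAt_Qred hf hH ⟨hc₁.trans_lt hs.1, hs.2.trans_le hd₁⟩ hfs he), ?_⟩
      rw [← sub_mul]
      exact mul_nonneg_of_nonpos_of_nonpos (sub_nonpos.2 (hV s hs)) (by linarith)
  linarith

/-- Above the level `β` the product `r |u'|` is smaller along the first branch. -/
lemma Branch.rp_lt_of_upper (hf : Continuous f) (h1 : Hf1 f b β) (h2 : Hf2 f) (h4 : Hf4' n f β)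
    (hH : ∀ s : ℝ, f s ≠ 0 → HasDerivAt H (-4 * ((n : ℝ) - 2) * (Fint f s / f s)) s)
    (B₁ : Branch n f r₁ p₁ m₁ M₁) (B₂ : Branch n f r₂ p₂ m₂ M₂)
    (hm₁ : m₁ < -β) (hm₂ : m₂ < -β) (hβM : β < M₁) (hM : M₁ < M₂)
    (hQ : Qred f H r₂ p₂ M₂ < Qred f H r₁ p₁ M₁) {s : ℝ} (hs : s ∈ Icc β M₁) :
    r₂ s * p₂ s < r₁ s * p₁ s := by
  have hβ : 0 < β := h1.2.2.1.trans h1.2.2.2.1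
  by_contra hcon
  have hne : ∀ {c d : ℝ}, β ≤ c → ∀ s ∈ Icc c d, f s ≠ 0 := fun hc s hs =>
    f_ne_zero h1 (hc.trans hs.1)
  have hder : ∀ {c d : ℝ}, β ≤ c → ∀ s ∈ Ioo c d,
      ∃ e, HasDerivAt (fun t => Fint f t / f t) e s ∧ ((n : ℝ) - 2) / 2 ≤ e :=
    fun hc s hs => ratio_hasDerivAt hf h1 h2 h4 (hc.trans_lt hs.1)
  have hM₁ : M₁ ∈ Ioo m₂ M₂ := ⟨by linarith, hM⟩
  obtain ⟨x, hx, hx0, hpos⟩ := exists_last_zero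
    (g := fun s => r₁ s * p₁ s - r₂ s * p₂ s) hs.2
    ((B₁.continuousOn_rp.mono (Icc_subset_Icc_left (by linarith [hs.1]))).sub
      (B₂.continuousOn_rp.mono (Icc_subset_Icc (by linarith [hs.1]) hM.le)))
    (by linarith)
    (by
      simp only [B₁.p_right, mul_zero, zero_sub, neg_pos]
      exact mul_neg_of_pos_of_neg (B₂.r_pos _ hM₁) (B₂.p_neg _ hM₁))
  simp only [sub_pos] at hx0 hpos
  have hβx : β ≤ x := hs.1.trans hx.1
  have hx₁ : x ∈ Ioo m₁ M₁ := ⟨by linarith, hx.2⟩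
  have hx₂ : x ∈ Ioo m₂ M₂ := ⟨by linarith, hx.2.trans hM⟩
  have hsub := B₁.Qred_sub_le hf hH B₂ hx₁.1.le hx₂.1.le hx.2.le le_rfl hM.le (hne hβx)
    (hder hβx) fun s hs => (hpos s ⟨hs.1, hs.2.le⟩).le
  have hmono := B₂.Qred_le hf hH hM₁.1.le hM.le le_rfl (hne hβM.le) (hder hβM.le)
  have hrp : r₁ x * p₁ x = r₂ x * p₂ x := by linarith
  have hQx : 0 < Fint f x * (r₂ x ^ 2 - r₁ x ^ 2) := by
    have : 0 < Qred f H r₁ p₁ x - Qred f H r₂ p₂ x := by linarith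
    simp only [Qred, ← mul_pow, hrp] at this
    linarith
  have hβx' : β < x := lt_of_le_of_ne hβx fun h => by
    rw [← h, h1.2.2.2.2.2.2.2, zero_mul] at hQx
    exact lt_irrefl _ hQx
  have hr : r₁ x ^ 2 < r₂ x ^ 2 :=
    sub_pos.1 (pos_of_mul_pos_right hQx (Fint_pos_of_lt hf h1 hβx').le)
  have hd := deriv_nonneg_of_pos_right ((B₁.hasDerivAt_rp hx₁).sub (B₂.hasDerivAt_rp hx₂)) hx0
    hx.2 fun s hs => sub_pos.2 (hpos s ⟨hs.1, hs.2.le⟩)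
  have hfx : 0 < f x := h1.2.2.2.2.1 x (h1.2.2.2.1.trans hβx')
  have hV : r₂ x * p₂ x < 0 := mul_neg_of_pos_of_neg (B₂.r_pos _ hx₂) (B₂.p_neg _ hx₂)
  have e₁ : r₁ x * f x / p₁ x = r₁ x ^ 2 * f x / (r₂ x * p₂ x) := by
    rw [← hrp]
    have := (B₁.r_pos _ hx₁).ne'
    field_simp
  have e₂ : r₂ x * f x / p₂ x = r₂ x ^ 2 * f x / (r₂ x * p₂ x) := by
    have := (B₂.r_pos _ hx₂).ne'
    field_simp
  rw [e₁, e₂] at hd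
  have : r₂ x ^ 2 * f x / (r₂ x * p₂ x) < r₁ x ^ 2 * f x / (r₂ x * p₂ x) :=
    div_lt_div_of_neg_of_lt hV (mul_lt_mul_of_pos_right hr hfx)
  linarith

/-- If `r₂ p₂ < r₁ p₁` then the ordering `r₂ ≤ r₁` propagates to smaller values of `s`. -/
lemma Branch.r_le_of_rp_lt (B₁ : Branch n f r₁ p₁ m₁ M₁) (B₂ : Branch n f r₂ p₂ m₂ M₂)
    {c d : ℝ} (hc₁ : m₁ ≤ c) (hc₂ : m₂ ≤ c) (hcd : c ≤ d) (hd₁ : d < M₁) (hd₂ : d < M₂)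
    (hV : ∀ s ∈ Ioc c d, r₂ s * p₂ s < r₁ s * p₁ s) (hr : r₂ d ≤ r₁ d) : r₂ c ≤ r₁ c := by
  by_contra hcon
  obtain ⟨x, hx, hx0, hpos⟩ := exists_first_zero (g := fun s => r₂ s - r₁ s) hcd
    ((B₂.cont_r.mono (Icc_subset_Icc hc₂ hd₂.le)).sub
      (B₁.cont_r.mono (Icc_subset_Icc hc₁ hd₁.le)))
    (by linarith) (by linarith)
  have hx₁ : x ∈ Ioo m₁ M₁ := ⟨hc₁.trans_lt hx.1, hx.2.trans_lt hd₁⟩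
  have hx₂ : x ∈ Ioo m₂ M₂ := ⟨hc₂.trans_lt hx.1, hx.2.trans_lt hd₂⟩
  have hd := deriv_nonpos_of_pos_left ((B₂.hasDerivAt_r x hx₂).sub (B₁.hasDerivAt_r x hx₁)) hx0
    hx.1 fun s hs => hpos s ⟨hs.1.le, hs.2⟩
  have hlt := hV x hx
  rw [show r₂ x = r₁ x by linarith] at hlt
  have hp : p₂ x < p₁ x := lt_of_mul_lt_mul_left hlt (B₁.r_pos x hx₁).le
  have := one_div_lt_one_div_of_neg_of_lt (B₁.p_neg x hx₁) hp
  linarith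

lemma Branch.hasDerivAt_r_mul_sqrt (hf : Continuous f) (B : Branch n f r p m M) {s : ℝ}
    (hs : s ∈ Ioo m M) :
    HasDerivAt (fun t => r t * √(p t ^ 2 + 2 * Fint f t))
      (√(p s ^ 2 + 2 * Fint f s) / p s - ((n : ℝ) - 1) * (p s / √(p s ^ 2 + 2 * Fint f s))) s := by
  have hp := (B.p_neg s hs).ne
  have hr := (B.r_pos s hs).ne'
  have hE := B.energy_pos s hs
  have hS := (Real.sqrt_pos.2 hE).ne'
  have hEd : HasDerivAt (fun t => p t ^ 2 + 2 * Fint f t) (-2 * ((n : ℝ) - 1) * p s / r s) s := by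
    refine (((B.hasDerivAt_p s hs).pow 2).add
      ((hasDerivAt_Fint hf s).const_mul 2)).congr_deriv ?_
    field_simp
    ring
  refine ((B.hasDerivAt_r s hs).mul (hEd.sqrt hE.ne')).congr_deriv ?_
  field_simp
  ring

/-- In a range of values where `F ≤ 0`, the slope term of `(r √(u'² + 2F))'` is monotone in the
slope. -/
lemma sqrt_div_sub_le {N P₁ P₂ G : ℝ} (hN : 1 ≤ N) (hG : G ≤ 0) (h₁ : P₁ < 0) (h₂ : P₂ < P₁)
    (hE : 0 < P₁ ^ 2 + G) :
    √(P₂ ^ 2 + G) / P₂ - (N - 1) * (P₂ / √(P₂ ^ 2 + G)) ≤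
      √(P₁ ^ 2 + G) / P₁ - (N - 1) * (P₁ / √(P₁ ^ 2 + G)) := by
  have hsq : P₁ ^ 2 < P₂ ^ 2 := by nlinarith
  have hE₂ : 0 < P₂ ^ 2 + G := by linarith
  have hS₁ := Real.sqrt_pos.2 hE
  have hS₂ := Real.sqrt_pos.2 hE₂
  have hP₂ : P₂ < 0 := h₂.trans h₁
  have key : √(P₁ ^ 2 + G) * (-P₂) ≤ √(P₂ ^ 2 + G) * (-P₁) := by
    refine (sq_le_sq₀ (mul_nonneg hS₁.le (by linarith)) (mul_nonneg hS₂.le (by linarith))).1 ?_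
    rw [mul_pow, mul_pow, Real.sq_sqrt hE.le, Real.sq_sqrt hE₂.le]
    nlinarith
  have e₁ : √(P₂ ^ 2 + G) / P₂ ≤ √(P₁ ^ 2 + G) / P₁ := by
    rw [← neg_le_neg_iff, ← div_neg, ← div_neg, div_le_div_iff₀ (by linarith) (by linarith)]
    exact key
  have e₂ : P₁ / √(P₁ ^ 2 + G) ≤ P₂ / √(P₂ ^ 2 + G) := by
    rw [div_le_div_iff₀ hS₁ hS₂]
    linarith
  nlinarith

/-- Between the levels `-β` and `β`, the orderings `r₂ ≤ r₁` and `r₂ p₂ < r₁ p₁` propagate down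
to the level `-β`. -/
lemma Branch.middle (hn : 2 ≤ n) (hf : Continuous f) (h1 : Hf1 f b β)
    (B₁ : Branch n f r₁ p₁ m₁ M₁) (B₂ : Branch n f r₂ p₂ m₂ M₂)
    (hm₁ : m₁ < -β) (hm₂ : m₂ < -β) (hM₁ : β < M₁) (hM₂ : β < M₂) {d : ℝ} (hd : d ∈ Icc (-β) β)
    (hr : r₂ d ≤ r₁ d) (hV : r₂ d * p₂ d < r₁ d * p₁ d) :
    r₂ (-β) ≤ r₁ (-β) ∧ r₂ (-β) * p₂ (-β) < r₁ (-β) * p₁ (-β) := by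
  have mem₁ : ∀ {s}, s ∈ Icc (-β) d → s ∈ Ioo m₁ M₁ := fun hs =>
    ⟨by linarith [hs.1], by linarith [hs.2, hd.2]⟩
  have mem₂ : ∀ {s}, s ∈ Icc (-β) d → s ∈ Ioo m₂ M₂ := fun hs =>
    ⟨by linarith [hs.1], by linarith [hs.2, hd.2]⟩
  have hdd : d ∈ Icc (-β) d := ⟨hd.1, le_rfl⟩
  have hn1 : (1 : ℝ) ≤ n := by exact_mod_cast (by omega : 1 ≤ n)
  have hpd : p₂ d < p₁ d := by
    have h2 := B₂.r_pos d (mem₂ hdd)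
    have h3 := B₁.p_neg d (mem₁ hdd)
    by_contra hcon
    nlinarith [mul_le_mul_of_nonpos_right hr h3.le]
  -- propagation of both orderings while `p₂ < p₁`
  have prop : ∀ x ∈ Icc (-β) d, (∀ s ∈ Ioc x d, p₂ s < p₁ s) →
      r₂ x ≤ r₁ x ∧ p₂ x < p₁ x ∧
        r₁ x * √(p₁ x ^ 2 + 2 * Fint f x) < r₂ x * √(p₂ x ^ 2 + 2 * Fint f x) := by
    intro x hx hp
    have sub : ∀ {s}, s ∈ Icc x d → s ∈ Icc (-β) d := fun hs => ⟨hx.1.trans hs.1, hs.2⟩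
    have hsub₁ : Icc x d ⊆ Icc m₁ M₁ := fun s hs => Ioo_subset_Icc_self (mem₁ (sub hs))
    have hsub₂ : Icc x d ⊆ Icc m₂ M₂ := fun s hs => Ioo_subset_Icc_self (mem₂ (sub hs))
    have hrx : r₂ x ≤ r₁ x := by
      have := le_of_hasDerivAt_nonneg (g := fun s => r₂ s - r₁ s) hx.2
        ((B₂.cont_r.mono hsub₂).sub (B₁.cont_r.mono hsub₁)) fun s hs => by
          have hs' := sub (Ioo_subset_Icc_self hs)
          refine ⟨_, (B₂.hasDerivAt_r s (mem₂ hs')).sub (B₁.hasDerivAt_r s (mem₁ hs')), ?_⟩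
          have := one_div_lt_one_div_of_neg_of_lt (B₁.p_neg s (mem₁ hs')) (hp s ⟨hs.1, hs.2.le⟩)
          linarith
      linarith
    have hcs : ∀ {r p : ℝ → ℝ} {m M : ℝ}, Branch n f r p m M → Icc x d ⊆ Icc m M →
        ContinuousOn (fun t => r t * √(p t ^ 2 + 2 * Fint f t)) (Icc x d) := fun B hsub =>
      (B.cont_r.mono hsub).mul ((((B.cont_p.mono hsub).pow 2).add
        (continuousOn_const.mul (continuous_Fint hf).continuousOn)).sqrt)
    have hW := le_of_hasDerivAt_nonneg
      (g := fun t => r₁ t * √(p₁ t ^ 2 + 2 * Fint f t) - r₂ t * √(p₂ t ^ 2 + 2 * Fint f t)) hx.2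
      ((hcs B₁ hsub₁).sub (hcs B₂ hsub₂)) fun s hs => by
        have hs' := sub (Ioo_subset_Icc_self hs)
        refine ⟨_, (B₁.hasDerivAt_r_mul_sqrt hf (mem₁ hs')).sub
          (B₂.hasDerivAt_r_mul_sqrt hf (mem₂ hs')), ?_⟩
        have hF : Fint f s ≤ 0 := Fint_nonpos hf h1 ⟨hs'.1, hs'.2.trans hd.2⟩
        exact sub_nonneg.2 (sqrt_div_sub_le hn1 (by linarith) (B₁.p_neg s (mem₁ hs'))
          (hp s ⟨hs.1, hs.2.le⟩) (B₁.energy_pos s (mem₁ hs')))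
    have hWd : r₁ d * √(p₁ d ^ 2 + 2 * Fint f d) < r₂ d * √(p₂ d ^ 2 + 2 * Fint f d) := by
      have hF : Fint f d ≤ 0 := Fint_nonpos hf h1 hd
      have hr2 := (B₂.r_pos d (mem₂ hdd))
      have hE₁ := B₁.energy_pos d (mem₁ hdd)
      have hE₂ := B₂.energy_pos d (mem₂ hdd)
      have hneg := mul_neg_of_pos_of_neg (B₁.r_pos d (mem₁ hdd)) (B₁.p_neg d (mem₁ hdd))
      refine lt_of_pow_lt_pow_left₀ 2 (mul_nonneg hr2.le (Real.sqrt_nonneg _)) ?_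
      rw [mul_pow, mul_pow, Real.sq_sqrt hE₁.le, Real.sq_sqrt hE₂.le]
      have hVsq : (r₁ d * p₁ d) ^ 2 < (r₂ d * p₂ d) ^ 2 := by nlinarith
      have hrsq : r₂ d ^ 2 ≤ r₁ d ^ 2 := pow_le_pow_left₀ hr2.le hr 2
      nlinarith [mul_le_mul_of_nonpos_right hrsq hF]
    have hWx : r₁ x * √(p₁ x ^ 2 + 2 * Fint f x) < r₂ x * √(p₂ x ^ 2 + 2 * Fint f x) := by
      linarith
    have hr2 := B₂.r_pos x (mem₂ hx)
    have hS : √(p₁ x ^ 2 + 2 * Fint f x) < √(p₂ x ^ 2 + 2 * Fint f x) := by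
      refine lt_of_mul_lt_mul_left (lt_of_le_of_lt ?_ hWx) hr2.le
      exact mul_le_mul_of_nonneg_right hrx (Real.sqrt_nonneg _)
    have hE := (Real.sqrt_lt_sqrt_iff (B₁.energy_pos x (mem₁ hx)).le).1 hS
    have h3 := B₁.p_neg x (mem₁ hx)
    have h4 := B₂.p_neg x (mem₂ hx)
    exact ⟨hrx, by nlinarith, hWx⟩
  have hp : ∀ s ∈ Icc (-β) d, p₂ s < p₁ s := by
    intro s hs
    by_contra hcon
    have hsub₁ : Icc s d ⊆ Icc m₁ M₁ := fun t ht =>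
      Ioo_subset_Icc_self (mem₁ ⟨hs.1.trans ht.1, ht.2⟩)
    have hsub₂ : Icc s d ⊆ Icc m₂ M₂ := fun t ht =>
      Ioo_subset_Icc_self (mem₂ ⟨hs.1.trans ht.1, ht.2⟩)
    obtain ⟨x, hx, hx0, hpos⟩ := exists_last_zero (g := fun t => p₁ t - p₂ t) hs.2
      ((B₁.cont_p.mono hsub₁).sub (B₂.cont_p.mono hsub₂)) (by linarith) (by linarith)
    have := (prop x ⟨hs.1.trans hx.1, hx.2.le⟩ fun t ht => by linarith [hpos t ht]).2.1
    linarith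
  have hl : -β ∈ Icc (-β) d := ⟨le_rfl, hd.1⟩
  obtain ⟨hrl, -, hW⟩ := prop (-β) hl fun s hs => hp s ⟨hs.1.le, hs.2⟩
  refine ⟨hrl, ?_⟩
  rw [Fint_neg h1, h1.2.2.2.2.2.2.2, mul_zero, add_zero, add_zero, Real.sqrt_sq_eq_abs,
    Real.sqrt_sq_eq_abs, abs_of_neg (B₁.p_neg _ (mem₁ hl)), abs_of_neg (B₂.p_neg _ (mem₂ hl))] at hW
  linarith

/-- Below the level `-β`, the orderings propagate down to the left endpoint of the first
branch. -/
lemma Branch.lower (hf : Continuous f) (h1 : Hf1 f b β) (h2 : Hf2 f) (h4 : Hf4' n f β)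
    (hH : ∀ s : ℝ, f s ≠ 0 → HasDerivAt H (-4 * ((n : ℝ) - 2) * (Fint f s / f s)) s)
    (B₁ : Branch n f r₁ p₁ m₁ M₁) (B₂ : Branch n f r₂ p₂ m₂ M₂) {d : ℝ} (hdβ : d ≤ -β)
    (hd₁ : d ∈ Ioo m₁ M₁) (hd₂ : d ∈ Ioo m₂ M₂) (hr : r₂ d ≤ r₁ d)
    (hV : r₂ d * p₂ d < r₁ d * p₁ d) (hQ : Qred f H r₂ p₂ d < Qred f H r₁ p₁ d) :
    m₂ < m₁ ∧ Qred f H r₂ p₂ m₂ < Qred f H r₁ p₁ m₁ := by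
  have hβ : 0 < β := h1.2.2.1.trans h1.2.2.2.1
  have hne : ∀ {c e : ℝ}, e ≤ -β → ∀ s ∈ Icc c e, f s ≠ 0 := fun he s hs =>
    (f_neg_of_le_neg h1 (hs.2.trans he)).ne
  have hder : ∀ {c d : ℝ}, d ≤ -β → ∀ s ∈ Ioo c d,
      ∃ e, HasDerivAt (fun t => Fint f t / f t) e s ∧ ((n : ℝ) - 2) / 2 ≤ e :=
    fun hd s hs => ratio_hasDerivAt_neg hf h1 h2 h4 (hs.2.trans_le hd)
  have hlt : ∀ s ∈ Icc (max m₁ m₂) d, r₂ s * p₂ s < r₁ s * p₁ s := by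
    intro s hs
    have hs₁ : m₁ ≤ s := (le_max_left _ _).trans hs.1
    have hs₂ : m₂ ≤ s := (le_max_right _ _).trans hs.1
    by_contra hcon
    obtain ⟨x, hx, hx0, hpos⟩ := exists_last_zero
      (g := fun s => r₁ s * p₁ s - r₂ s * p₂ s) hs.2
      ((B₁.continuousOn_rp.mono (Icc_subset_Icc hs₁ hd₁.2.le)).sub
        (B₂.continuousOn_rp.mono (Icc_subset_Icc hs₂ hd₂.2.le)))
      (by linarith) (by linarith)
    simp only [sub_pos] at hx0 hpos
    have hx₁ : m₁ ≤ x := hs₁.trans hx.1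
    have hx₂ : m₂ ≤ x := hs₂.trans hx.1
    have hrx := B₁.r_le_of_rp_lt B₂ hx₁ hx₂ hx.2.le hd₁.2 hd₂.2 hpos hr
    have hsub := B₁.Qred_sub_le hf hH B₂ hx₁ hx₂ hx.2.le hd₁.2.le hd₂.2.le (hne hdβ)
      (hder hdβ) fun s hs => (hpos s ⟨hs.1, hs.2.le⟩).le
    have hrp : r₁ x * p₁ x = r₂ x * p₂ x := by linarith
    have hQx : 0 < Fint f x * (r₂ x ^ 2 - r₁ x ^ 2) := by
      have : 0 < Qred f H r₁ p₁ x - Qred f H r₂ p₂ x := by linarith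
      simp only [Qred, ← mul_pow, hrp] at this
      linarith
    have hr2 := B₂.r_nonneg x ⟨hx₂, (hx.2.trans hd₂.2).le⟩
    have hsq : r₂ x ^ 2 ≤ r₁ x ^ 2 := pow_le_pow_left₀ hr2 hrx 2
    have hF := Fint_pos_of_lt_neg hf h1 (hx.2.trans_le hdβ)
    nlinarith
  have hm : m₂ < m₁ := by
    by_contra hcon
    have hle : m₁ ≤ m₂ := not_lt.1 hcon
    have := hlt m₂ ⟨(max_eq_right hle).le, hd₂.1.le⟩
    have hmem : m₂ ∈ Icc m₁ M₁ := ⟨hle, (hd₂.1.trans hd₁.2).le⟩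
    rw [B₂.p_left, mul_zero] at this
    exact absurd this
      (not_lt.2 (mul_nonpos_of_nonneg_of_nonpos (B₁.r_nonneg _ hmem) (B₁.p_nonpos hmem)))
  refine ⟨hm, ?_⟩
  have hsub := B₁.Qred_sub_le hf hH B₂ le_rfl hm.le hd₁.1.le hd₁.2.le hd₂.2.le (hne hdβ)
    (hder hdβ) fun s hs => (hlt s ⟨(max_eq_left hm.le).le.trans hs.1.le, hs.2.le⟩).le
  have hmβ : m₁ ≤ -β := hd₁.1.le.trans hdβ
  have hmono := B₂.Qred_le hf hH le_rfl hm.le (hd₁.1.trans hd₂.2).le (hne hmβ) (hder hmβ)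
  linarith

/-- Two branches that meet at `x`, with the first one having the smaller radius just above `x`,
cross transversally there. -/
lemma Branch.p_lt_of_first_meeting (hf : Continuous f) (hn : 2 ≤ n)
    (B₁ : Branch n f r₁ p₁ m₁ M₁) (B₂ : Branch n f r₂ p₂ m₂ M₂) {x d : ℝ} (hxd : x < d)
    (hx₁ : m₁ < x) (hx₂ : m₂ < x) (hd₁ : d < M₁) (hd₂ : d < M₂) (hx : r₁ x = r₂ x)
    (hr : ∀ s ∈ Ioc x d, r₁ s < r₂ s) : p₂ x < p₁ x := by
  have mem₁ : ∀ {s}, s ∈ Icc x d → s ∈ Ioo m₁ M₁ := fun hs =>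
    ⟨hx₁.trans_le hs.1, hs.2.trans_lt hd₁⟩
  have mem₂ : ∀ {s}, s ∈ Icc x d → s ∈ Ioo m₂ M₂ := fun hs =>
    ⟨hx₂.trans_le hs.1, hs.2.trans_lt hd₂⟩
  have hsub₁ : Icc x d ⊆ Icc m₁ M₁ := fun s hs => Ioo_subset_Icc_self (mem₁ hs)
  have hsub₂ : Icc x d ⊆ Icc m₂ M₂ := fun s hs => Ioo_subset_Icc_self (mem₂ hs)
  by_contra hcon
  -- otherwise `p₁ ≤ p₂` persists to the right of `x`, by a Gronwall argument
  have hcont : ContinuousOn (fun s => f s / (p₁ s * p₂ s)) (Icc x d) :=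
    hf.continuousOn.div ((B₁.cont_p.mono hsub₁).mul (B₂.cont_p.mono hsub₂)) fun s hs =>
      (mul_pos_of_neg_of_neg (B₁.p_neg s (mem₁ hs)) (B₂.p_neg s (mem₂ hs))).ne'
  obtain ⟨K, hK⟩ := (isCompact_Icc.image_of_continuousOn hcont).bddAbove
  have hle : ∀ s ∈ Icc x d, p₁ s ≤ p₂ s := by
    intro s hs
    by_contra hs0
    have hsub : Icc x s ⊆ Icc x d := Icc_subset_Icc_right hs.2
    obtain ⟨y, hy, hy0, hpos⟩ := exists_last_zero (g := fun t => p₁ t - p₂ t) hs.1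
      ((B₁.cont_p.mono (hsub.trans hsub₁)).sub (B₂.cont_p.mono (hsub.trans hsub₂)))
      (by linarith) (by linarith)
    have hsub' : Icc y s ⊆ Icc x d := Icc_subset_Icc hy.1 hs.2
    have hmono := le_of_hasDerivAt_nonneg
      (g := fun t => (p₂ t - p₁ t) * Real.exp (-K * t)) hy.2.le
      (((B₂.cont_p.mono (hsub'.trans hsub₂)).sub (B₁.cont_p.mono (hsub'.trans hsub₁))).mul
        (by fun_prop)) fun t ht => by
        have ht' : t ∈ Icc x d := hsub' (Ioo_subset_Icc_self ht)
        have hp1 := B₁.p_neg t (mem₁ ht')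
        have hp2 := B₂.p_neg t (mem₂ ht')
        have hexp : HasDerivAt (fun t => Real.exp (-K * t)) (Real.exp (-K * t) * (-K)) t := by
          simpa using ((hasDerivAt_id t).const_mul (-K)).exp
        refine ⟨_, ((B₂.hasDerivAt_p t (mem₂ ht')).sub
          (B₁.hasDerivAt_p t (mem₁ ht'))).mul hexp, ?_⟩
        have hKt : f t / (p₁ t * p₂ t) ≤ K := hK ⟨t, ht', rfl⟩
        have hD : 0 < p₁ t - p₂ t := hpos t ⟨ht.1, ht.2.le⟩
        have hrt : r₁ t < r₂ t := hr t ⟨hy.1.trans_lt ht.1, ht'.2⟩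
        have hn1 : (0 : ℝ) ≤ (n : ℝ) - 1 := by
          have : (1 : ℝ) ≤ n := by exact_mod_cast (by omega : 1 ≤ n)
          linarith
        have hinv : ((n : ℝ) - 1) / r₂ t ≤ ((n : ℝ) - 1) / r₁ t :=
          div_le_div_of_nonneg_left hn1 (B₁.r_pos t (mem₁ ht')) hrt.le
        have hfrac : f t / p₁ t - f t / p₂ t = -(f t / (p₁ t * p₂ t)) * (p₁ t - p₂ t) := by
          field_simp [hp1.ne, hp2.ne]
          ring
        have hexp0 := Real.exp_pos (-K * t)
        have hmain : 0 ≤ (-((n : ℝ) - 1) / r₂ t - f t / p₂ t -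
            (-((n : ℝ) - 1) / r₁ t - f t / p₁ t)) - K * (p₂ t - p₁ t) := by
          rw [neg_div, neg_div]
          nlinarith [mul_le_mul_of_nonneg_right hKt hD.le]
        simp only [Pi.sub_apply]
        nlinarith [mul_nonneg hmain hexp0.le]
    have hexp0 := Real.exp_pos (-K * s)
    have hy' : p₂ y - p₁ y = 0 := by linarith
    simp only [hy', zero_mul] at hmono
    nlinarith
  have hlast := le_of_hasDerivAt_nonneg (g := fun s => r₁ s - r₂ s) hxd.le
    ((B₁.cont_r.mono hsub₁).sub (B₂.cont_r.mono hsub₂)) fun s hs => by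
      have hs' : s ∈ Icc x d := Ioo_subset_Icc_self hs
      refine ⟨_, (B₁.hasDerivAt_r s (mem₁ hs')).sub (B₂.hasDerivAt_r s (mem₂ hs')), ?_⟩
      exact sub_nonneg.2 (one_div_le_one_div_of_neg_of_le (B₂.p_neg s (mem₂ hs')) (hle s hs'))
  linarith [hr d ⟨hxd, le_rfl⟩]

theorem Branch.comparison (hn : 2 ≤ n) (hf : Continuous f) (h1 : Hf1 f b β) (h2 : Hf2 f)
    (h4 : Hf4' n f β)
    (hH : ∀ s : ℝ, f s ≠ 0 → HasDerivAt H (-4 * ((n : ℝ) - 2) * (Fint f s / f s)) s)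
    (B₁ : Branch n f r₁ p₁ m₁ M₁) (B₂ : Branch n f r₂ p₂ m₂ M₂)
    (hm₁ : m₁ < -β) (hm₂ : m₂ < -β) (hM₁ : β < M₁) (hM : M₁ < M₂)
    (hQ : Qred f H r₂ p₂ M₂ < Qred f H r₁ p₁ M₁)
    {c : ℝ} (hc₁ : c ∈ Ioo m₁ M₁) (hc₂ : c ∈ Ioo m₂ M₂) (hc : r₁ c = r₂ c) :
    m₂ < m₁ ∧ Qred f H r₂ p₂ m₂ < Qred f H r₁ p₁ m₁ := by
  have hβ : 0 < β := h1.2.2.1.trans h1.2.2.2.1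
  have hM₂ : β < M₂ := hM₁.trans hM
  have hup : ∀ s ∈ Icc β M₁, r₂ s * p₂ s < r₁ s * p₁ s := fun s hs =>
    B₁.rp_lt_of_upper hf h1 h2 h4 hH B₂ hm₁ hm₂ hM₁ hM hQ hs
  have of_mid : ∀ d ∈ Icc (-β) β, r₂ d ≤ r₁ d → r₂ d * p₂ d < r₁ d * p₁ d →
      m₂ < m₁ ∧ Qred f H r₂ p₂ m₂ < Qred f H r₁ p₁ m₁ := by
    intro d hd hr hV
    obtain ⟨hr', hV'⟩ := B₁.middle hn hf h1 B₂ hm₁ hm₂ hM₁ hM₂ hd hr hV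
    have hb₁ : -β ∈ Ioo m₁ M₁ := ⟨hm₁, by linarith⟩
    have hb₂ : -β ∈ Ioo m₂ M₂ := ⟨hm₂, by linarith⟩
    refine B₁.lower hf h1 h2 h4 hH B₂ le_rfl hb₁ hb₂ hr' hV' ?_
    have hneg := mul_neg_of_pos_of_neg (B₁.r_pos _ hb₁) (B₁.p_neg _ hb₁)
    have hVsq : (r₁ (-β) * p₁ (-β)) ^ 2 < (r₂ (-β) * p₂ (-β)) ^ 2 := by nlinarith
    simp only [Qred, Fint_neg h1, h1.2.2.2.2.2.2.2, ← mul_pow, zero_div]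
    linarith
  by_cases hrβ : r₂ β ≤ r₁ β
  · exact of_mid β ⟨by linarith, le_rfl⟩ hrβ (hup β ⟨le_rfl, hM₁.le⟩)
  have hcβ : c < β := by
    by_contra hcon
    exact hrβ (B₁.r_le_of_rp_lt B₂ (by linarith) (by linarith) (not_lt.1 hcon) hc₁.2 hc₂.2
      (fun s hs => hup s ⟨hs.1.le, hs.2.trans hc₁.2.le⟩) hc.ge)
  obtain ⟨x, hx, hx0, hpos⟩ := exists_last_zero (g := fun s => r₂ s - r₁ s) hcβ.le
    ((B₂.cont_r.mono (Icc_subset_Icc hc₂.1.le hM₂.le)).sub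
      (B₁.cont_r.mono (Icc_subset_Icc hc₁.1.le hM₁.le))) (by linarith) (by linarith)
  have hx₁ : x ∈ Ioo m₁ M₁ := ⟨hc₁.1.trans_le hx.1, hx.2.trans hM₁⟩
  have hx₂ : x ∈ Ioo m₂ M₂ := ⟨hc₂.1.trans_le hx.1, hx.2.trans hM₂⟩
  have hrx : r₁ x = r₂ x := by linarith
  have hpx := B₁.p_lt_of_first_meeting hf hn B₂ hx.2 hx₁.1 hx₂.1 hM₁ hM₂ hrx
    fun s hs => by linarith [hpos s hs]
  have hVx : r₂ x * p₂ x < r₁ x * p₁ x := by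
    rw [hrx]
    exact mul_lt_mul_of_pos_left hpx (B₂.r_pos x hx₂)
  rcases le_total (-β) x with h | h
  · exact of_mid x ⟨h, hx.2.le⟩ hrx.ge hVx
  · refine B₁.lower hf h1 h2 h4 hH B₂ h hx₁ hx₂ hrx.ge hVx ?_
    have hneg := mul_neg_of_pos_of_neg (B₁.r_pos _ hx₁) (B₁.p_neg _ hx₁)
    have hF : 0 ≤ Fint f x := by
      rcases h.eq_or_lt with h | h
      · rw [h, Fint_neg h1, h1.2.2.2.2.2.2.2]
      · exact (Fint_pos_of_lt_neg hf h1 h).le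
    have hq : Fint f x / f x ≤ 0 :=
      div_nonpos_of_nonneg_of_nonpos hF (f_neg_of_le_neg h1 h).le
    have hVsq : (r₁ x * p₁ x) ^ 2 < (r₂ x * p₂ x) ^ 2 := by nlinarith
    have hmul := mul_le_mul_of_nonpos_left hVx.le hq
    simp only [Qred, ← mul_pow]
    rw [hrx] at hVsq hmul ⊢
    linarith

end Comparison

/-! ### Radial solutions and their critical points -/

/-- `v` solves the radial equation on `(0,∞)` with derivative `w`, both continuous up to `0`. -/
structure RadialSol (n : ℕ) (f v w : ℝ → ℝ) : Prop where
  cont : ContinuousOn v (Ici 0)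
  cont_deriv : ContinuousOn w (Ici 0)
  deriv_zero : w 0 = 0
  hasDerivAt : ∀ r, 0 < r → HasDerivAt v (w r) r
  hasDerivAt_deriv : ∀ r, 0 < r → HasDerivAt w (-((n : ℝ) - 1) / r * w r - f (v r)) r

/-- The energy `v'² + 2 F(v)`. -/
noncomputable def energy (f v w : ℝ → ℝ) (r : ℝ) : ℝ := w r ^ 2 + 2 * Fint f (v r)

section Radial

variable {n : ℕ} {f v w : ℝ → ℝ} {b β : ℝ}

lemma radialSol_of_family {u : ℝ → ℝ → ℝ} (hu : Family n f u) {α : ℝ} (hα : 0 < α) :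
    RadialSol n f (u α) (deriv (u α)) := by
  obtain ⟨-, h0, hc, hd, hE⟩ := hu.1 α hα
  refine ⟨hc, ?_, h0, fun r hr => (hd r hr).1.hasDerivAt, fun r hr => ?_⟩
  · exact hu.2.2.comp (f := fun r : ℝ => (α, r)) (by fun_prop) fun r hr => ⟨hα, hr⟩
  · refine (hd r hr).2.hasDerivAt.congr_deriv ?_
    have := hE r hr
    rw [neg_div, neg_mul]
    linarith

lemma RadialSol.sign_mul (h1 : Hf1 f b β) (h : RadialSol n f v w) {σ : ℝ} (hσ : σ = 1 ∨ σ = -1) :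
    RadialSol n f (fun r => σ * v r) (fun r => σ * w r) := by
  refine ⟨continuousOn_const.mul h.cont, continuousOn_const.mul h.cont_deriv, by
    simp [h.deriv_zero], fun r hr => (h.hasDerivAt r hr).const_mul σ, fun r hr => ?_⟩
  refine ((h.hasDerivAt_deriv r hr).const_mul σ).congr_deriv ?_
  rcases hσ with rfl | rfl
  · simp
  · simp only [neg_one_mul, h1.1]
    ring

lemma RadialSol.energy_continuousOn (hf : Continuous f) (h : RadialSol n f v w) :
    ContinuousOn (energy f v w) (Ici 0) :=
  (h.cont_deriv.pow 2).add
    (continuousOn_const.mul ((continuous_Fint hf).comp_continuousOn h.cont))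

lemma RadialSol.hasDerivAt_energy (hf : Continuous f) (h : RadialSol n f v w) {r : ℝ}
    (hr : 0 < r) : HasDerivAt (energy f v w) (-(2 * ((n : ℝ) - 1) / r * w r ^ 2)) r := by
  refine (((h.hasDerivAt_deriv r hr).pow 2).add
    (((hasDerivAt_Fint hf (v r)).comp r (h.hasDerivAt r hr)).const_mul 2)).congr_deriv ?_
  field_simp
  ring

lemma RadialSol.energy_le (hn : 2 ≤ n) (hf : Continuous f) (h : RadialSol n f v w) {c d : ℝ}
    (hc : 0 ≤ c) (hcd : c ≤ d) : energy f v w d ≤ energy f v w c := by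
  have hn1 : (0 : ℝ) ≤ (n : ℝ) - 1 := by
    have : (2 : ℝ) ≤ n := by exact_mod_cast hn
    linarith
  have := le_of_hasDerivAt_nonneg (g := fun r => -energy f v w r) hcd
    ((h.energy_continuousOn hf).mono fun r hr => hc.trans hr.1).neg fun r hr => by
      have hr0 : 0 < r := hc.trans_lt hr.1
      refine ⟨_, (h.hasDerivAt_energy hf hr0).neg, ?_⟩
      rw [neg_neg]
      positivity
  linarith

lemma RadialSol.energy_lt (hn : 2 ≤ n) (hf : Continuous f) (h : RadialSol n f v w) {c d : ℝ}
    (hc : 0 ≤ c) (hcd : c < d) (hw : ∀ r ∈ Ioo c d, w r ≠ 0) :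
    energy f v w d < energy f v w c := by
  have hn1 : (0 : ℝ) < (n : ℝ) - 1 := by
    have : (2 : ℝ) ≤ n := by exact_mod_cast hn
    linarith
  have := lt_of_hasDerivAt_pos (g := fun r => -energy f v w r) hcd
    ((h.energy_continuousOn hf).mono fun r hr => hc.trans hr.1).neg fun r hr => by
      have hr0 : 0 < r := hc.trans_lt hr.1
      have := hw r hr
      refine ⟨_, (h.hasDerivAt_energy hf hr0).neg, ?_⟩
      rw [neg_neg]
      positivity
  linarith

/-- As long as the solution stays below `-β`, a nonnegative derivative becomes positive. -/
lemma RadialSol.deriv_pos (hn : 2 ≤ n) (h1 : Hf1 f b β) (h : RadialSol n f v w) {c d : ℝ}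
    (hc : 0 ≤ c) (hcd : c < d) (hwc : w c = 0) (hv : ∀ r ∈ Ioo c d, v r < -β) : 0 < w d := by
  obtain ⟨k, rfl⟩ : ∃ k, n = k + 2 := ⟨n - 2, by omega⟩
  have hd : 0 < d := hc.trans_lt hcd
  have key := lt_of_hasDerivAt_pos (g := fun r => r ^ (k + 1) * w r) hcd
    ((continuous_pow _).continuousOn.mul (h.cont_deriv.mono fun r hr => hc.trans hr.1))
    fun r hr => by
      have hr0 : 0 < r := hc.trans_lt hr.1
      have hfr := f_neg_of_le_neg h1 (hv r hr).le
      refine ⟨-(r ^ (k + 1) * f (v r)), ((hasDerivAt_pow (k + 1) r).mul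
        (h.hasDerivAt_deriv r hr0)).congr_deriv ?_, ?_⟩
      · push_cast
        simp only [pow_succ]
        field_simp
        ring
      · have : 0 < r ^ (k + 1) := by positivity
        nlinarith
  simp only [hwc, mul_zero] at key
  exact pos_of_mul_pos_right key (by positivity)

lemma lt_neg_of_Fint_pos (hf : Continuous f) (h1 : Hf1 f b β) {s : ℝ} (hs : s ≤ 0)
    (hF : 0 < Fint f s) : s < -β := by
  have hβ : 0 < β := h1.2.2.1.trans h1.2.2.2.1
  by_contra hcon
  linarith [Fint_nonpos hf h1 (s := s) ⟨not_lt.1 hcon, by linarith⟩]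

lemma lt_of_Fint_pos (hf : Continuous f) (h1 : Hf1 f b β) {s : ℝ} (hs : 0 ≤ s)
    (hF : 0 < Fint f s) : β < s := by
  rw [← Fint_neg h1] at hF
  linarith [lt_neg_of_Fint_pos hf h1 (s := -s) (by linarith) hF]

lemma RadialSol.strictMonoOn (h : RadialSol n f v w) {c d : ℝ} (hc : 0 ≤ c)
    (hw : ∀ r ∈ Ioo c d, 0 < w r) : StrictMonoOn v (Icc c d) := by
  refine strictMonoOn_of_deriv_pos (convex_Icc c d) (h.cont.mono fun r hr => hc.trans hr.1) ?_
  rw [interior_Icc]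
  intro r hr
  rw [(h.hasDerivAt r (hc.trans_lt hr.1)).deriv]
  exact hw r hr

/-- The first critical point after the first zero of a solution that starts at rest below `-β` and
still has positive energy later on. -/
lemma RadialSol.next_critical_point (hn : 2 ≤ n) (hf : Continuous f) (h1 : Hf1 f b β)
    (h : RadialSol n f v w) {T Z T' R : ℝ} (hT : 0 ≤ T) (hwT : w T = 0) (hvT : v T < -β)
    (hZ : Z = sSup {r | T < r ∧ ∀ s ∈ Ioo T r, v s < 0 ∧ 0 < w s})
    (hT' : T' = sInf {r | Z < r ∧ w r = 0}) (hTT' : T < T')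
    (hR : 0 < energy f v w R) (hR' : T' ≤ R ∨ T < R ∧ β < v R) :
    w T' = 0 ∧ β < v T' ∧ ∀ r ∈ Ioo T T', 0 < w r := by
  have hβ : 0 < β := h1.2.2.1.trans h1.2.2.2.1
  set A := {r | T < r ∧ ∀ s ∈ Ioo T r, v s < 0 ∧ 0 < w s} with hA
  set S := {r | Z < r ∧ w r = 0} with hS
  have cont_v : ∀ {r}, 0 < r → ContinuousAt v r := fun hr => (h.hasDerivAt _ hr).continuousAt
  have cont_w : ∀ {r}, 0 < r → ContinuousAt w r := fun hr =>
    (h.hasDerivAt_deriv _ hr).continuousAt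
  -- the set defining `Z` is nonempty
  have hAne : A.Nonempty := by
    have hev : ∀ᶠ r in nhdsWithin T (Ioi T), v r < -β :=
      ((h.cont T hT).mono fun r hr => hT.trans (le_of_lt hr)).eventually_lt_const hvT
    obtain ⟨d, hd, hdv⟩ := (mem_nhdsGT_iff_exists_Ioo_subset).1 hev
    refine ⟨d, hd, fun s hs => ⟨by linarith [show v s < -β from hdv hs], ?_⟩⟩
    exact h.deriv_pos hn h1 hT hs.1 hwT fun r hr => hdv ⟨hr.1, hr.2.trans hs.2⟩
  have hSne : S.Nonempty := by
    by_contra hcon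
    rw [not_nonempty_iff_eq_empty.1 hcon, Real.sInf_empty] at hT'
    linarith
  have hSbdd : BddBelow S := ⟨Z, fun r hr => hr.1.le⟩
  have hAbdd : BddAbove A := by
    by_contra hcon
    obtain ⟨r, hr⟩ := hSne
    have hrT : r ≤ T := by
      by_contra hrT
      rw [bddAbove_def] at hcon
      push Not at hcon
      obtain ⟨y, hy, hry⟩ := hcon r
      exact (hy.2 r ⟨not_le.1 hrT, hry⟩).2.ne' hr.2
    linarith [csInf_le hSbdd hr]
  have hTZ : T < Z := by
    obtain ⟨r, hr⟩ := hAne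
    exact hr.1.trans_le (hZ ▸ le_csSup hAbdd hr)
  have hZ0 : 0 < Z := hT.trans_lt hTZ
  have hZprop : ∀ s ∈ Ioo T Z, v s < 0 ∧ 0 < w s := by
    intro s hs
    obtain ⟨r, hr, hsr⟩ := exists_lt_of_lt_csSup hAne (hZ ▸ hs.2)
    exact hr.2 s ⟨hs.1, hsr⟩
  have hZT' : Z ≤ T' := hT' ▸ le_csInf hSne fun r hr => hr.1.le
  have hcl : closure (Ioo T Z) = Icc T Z := closure_Ioo hTZ.ne
  have hsub : closure (Ioo T Z) ⊆ Ici 0 := by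
    rw [hcl]
    exact fun r hr => hT.trans hr.1
  have hZcl : Z ∈ closure (Ioo T Z) := hcl ▸ ⟨hTZ.le, le_rfl⟩
  have hvZ : v Z ≤ 0 :=
    le_on_closure (fun s hs => (hZprop s hs).1.le) (h.cont.mono hsub) continuousOn_const hZcl
  have hwZ : 0 ≤ w Z :=
    le_on_closure (fun s hs => (hZprop s hs).2.le) continuousOn_const (h.cont_deriv.mono hsub) hZcl
  have hZR : Z ≤ R := by
    rcases hR' with h' | h'
    · exact hZT'.trans h'
    · by_contra hcon
      linarith [(hZprop R ⟨h'.1, not_le.1 hcon⟩).1]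
  have hEZ : 0 < energy f v w Z := hR.trans_le (h.energy_le hn hf hZ0.le hZR)
  have hwZ' : 0 < w Z := by
    refine lt_of_le_of_ne hwZ fun h0 => ?_
    rw [energy, ← h0] at hEZ
    have hvZ' : v Z < -β := lt_neg_of_Fint_pos hf h1 hvZ (by linarith)
    have hmono := h.strictMonoOn hT fun s hs => (hZprop s hs).2
    refine (h.deriv_pos hn h1 hT hTZ hwT fun r hr => ?_).ne h0
    exact (hmono (Ioo_subset_Icc_self hr) ⟨hTZ.le, le_rfl⟩ hr.2).trans hvZ'
  have hvZ' : v Z = 0 := by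
    refine hvZ.antisymm (not_lt.1 fun hlt => ?_)
    have hev : ∀ᶠ r in nhds Z, v r < 0 ∧ 0 < w r :=
      ((cont_v hZ0).eventually_lt_const hlt).and ((cont_w hZ0).eventually_const_lt hwZ')
    obtain ⟨ε, hε, hball⟩ := Metric.eventually_nhds_iff.1 hev
    have hmem : Z + ε / 2 ∈ A := by
      refine ⟨by linarith, fun s hs => ?_⟩
      rcases lt_or_ge s Z with hsZ | hsZ
      · exact hZprop s ⟨hs.1, hsZ⟩
      · refine hball ?_
        rw [Real.dist_eq, abs_of_nonneg (by linarith)]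
        linarith [hs.2]
    linarith [le_csSup hAbdd hmem]
  have hwT' : w T' = 0 := by
    have hclosed : IsClosed (Ici 0 ∩ w ⁻¹' {0}) :=
      h.cont_deriv.preimage_isClosed_of_isClosed isClosed_Ici isClosed_singleton
    have hsubS : S ⊆ Ici 0 ∩ w ⁻¹' {0} := fun r hr => ⟨hZ0.le.trans hr.1.le, hr.2⟩
    exact (closure_minimal hsubS hclosed (hT' ▸ csInf_mem_closure hSne hSbdd)).2
  have hpos : ∀ r ∈ Ioo T T', 0 < w r := by
    intro r hr
    rcases lt_trichotomy r Z with hrZ | rfl | hrZ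
    · exact (hZprop r ⟨hr.1, hrZ⟩).2
    · exact hwZ'
    · by_contra hcon
      obtain ⟨x, hx, hx0, -⟩ := exists_first_zero hrZ.le
        (h.cont_deriv.mono fun s hs => hZ0.le.trans hs.1) hwZ' (not_lt.1 hcon)
      have hxS : x ∈ S := ⟨hx.1, hx0⟩
      linarith [csInf_le hSbdd hxS, hx.2, hr.2]
  have hZT'' : Z < T' := lt_of_le_of_ne hZT' fun heq => by
    rw [heq, hwT'] at hwZ'
    exact lt_irrefl _ hwZ'
  have hmono := h.strictMonoOn hT hpos
  have hvT' : 0 < v T' := hvZ' ▸ hmono ⟨hTZ.le, hZT'⟩ ⟨hTT'.le, le_rfl⟩ hZT''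
  refine ⟨hwT', ?_, hpos⟩
  rcases le_or_gt T' R with hle | hgt
  · have hE := hR.trans_le (h.energy_le hn hf (hT.trans hTT'.le) hle)
    rw [energy, hwT'] at hE
    exact lt_of_Fint_pos hf h1 hvT'.le (by linarith)
  · obtain ⟨hTR, hvR⟩ := hR'.resolve_left (not_le.2 hgt)
    exact hvR.trans (hmono ⟨hTR.le, hgt.le⟩ ⟨hTT'.le, le_rfl⟩ hgt)

end Radial

/-! ### The critical points of the family -/

section CriticalPoints

variable {n k : ℕ} {f : ℝ → ℝ} {u : ℝ → ℝ → ℝ} {v w : ℝ → ℝ} {b β α αs a δ₁ T R : ℝ}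

lemma Tk_nonneg (u : ℝ → ℝ → ℝ) (j : ℕ) (α : ℝ) : 0 ≤ Tk u j α := by
  induction j with
  | zero => exact le_rfl
  | succ j ih =>
    have hZ : 0 ≤ Zk u (j + 1) α := Real.sSup_nonneg fun r hr => ih.trans hr.1.le
    exact Real.sInf_nonneg fun r hr => hZ.trans hr.1.le

lemma energy_sign_mul (h1 : Hf1 f b β) {σ : ℝ} (hσ : σ = 1 ∨ σ = -1) (r : ℝ) :
    energy f (fun r => σ * v r) (fun r => σ * w r) r = energy f v w r := by
  rcases hσ with rfl | rfl
  · simp [energy]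
  · simp [energy, Fint_neg h1]

lemma Tk_succ_spec (hn : 2 ≤ n) (hf : Continuous f) (h1 : Hf1 f b β)
    (h : RadialSol n f (u α) (deriv (u α))) {j : ℕ} (hT : deriv (u α) (Tk u j α) = 0)
    (hv : β < (-1) ^ j * u α (Tk u j α)) (hlt : Tk u j α < Tk u (j + 1) α)
    (hR : 0 < energy f (u α) (deriv (u α)) R)
    (hR' : Tk u (j + 1) α ≤ R ∨ Tk u j α < R ∧ β < (-1) ^ (j + 1) * u α R) :
    deriv (u α) (Tk u (j + 1) α) = 0 ∧ β < (-1) ^ (j + 1) * u α (Tk u (j + 1) α) ∧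
      ∀ r ∈ Ioo (Tk u j α) (Tk u (j + 1) α), 0 < (-1) ^ (j + 1) * deriv (u α) r := by
  have hσ : ((-1 : ℝ) ^ (j + 1)) = 1 ∨ ((-1 : ℝ) ^ (j + 1)) = -1 := neg_one_pow_eq_or ℝ (j + 1)
  have hσ0 : ((-1 : ℝ) ^ (j + 1)) ≠ 0 := by positivity
  obtain ⟨h0, hβ, hpos⟩ := (h.sign_mul h1 hσ).next_critical_point hn hf h1 (R := R)
    (T' := Tk u (j + 1) α) (Z := Zk u (j + 1) α) (Tk_nonneg u j α)
    (by simp [hT]) (by rw [pow_succ]; linarith) rfl (by simp only [mul_eq_zero, hσ0, false_or]; rfl)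
    hlt (by rwa [energy_sign_mul h1 hσ]) hR'
  exact ⟨(mul_eq_zero.1 h0).resolve_left hσ0, hβ, hpos⟩

lemma Tk_spec (hn : 2 ≤ n) (hf : Continuous f) (h1 : Hf1 f b β)
    (h : RadialSol n f (u α) (deriv (u α))) (hα : β < u α 0)
    (hR : 0 < energy f (u α) (deriv (u α)) R) {N : ℕ}
    (hstep : ∀ j < N, Tk u j α < Tk u (j + 1) α ∧
      (Tk u (j + 1) α ≤ R ∨ Tk u j α < R ∧ β < (-1) ^ (j + 1) * u α R)) :
    ∀ j ≤ N, deriv (u α) (Tk u j α) = 0 ∧ β < (-1) ^ j * u α (Tk u j α) := by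
  intro j
  induction j with
  | zero => exact fun _ => ⟨h.deriv_zero, by simpa [show Tk u 0 α = 0 from rfl] using hα⟩
  | succ j ih =>
    intro hj
    obtain ⟨h0, hβ⟩ := ih (by omega)
    obtain ⟨hlt, halt⟩ := hstep j (by omega)
    have := Tk_succ_spec hn hf h1 h h0 hβ hlt hR halt
    exact ⟨this.1, this.2.1⟩

lemma Tk_lt_Tk_succ (hD : DeltaOneLemma f β u k αs a δ₁) {α α' : ℝ}
    (hα : α ∈ Ioo (αs - δ₁) (αs + δ₁)) (hα' : α' ∈ Ioo (αs - δ₁) (αs + δ₁)) {j : ℕ}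
    (hj : j + 1 ≤ k - 1) : Tk u j α < Tk u (j + 1) α' := by
  have key : ∀ x ∈ Ioo (αs - δ₁) (αs + δ₁), ∀ y ∈ Ioo (αs - δ₁) (αs + δ₁), x < y →
      max (Tk u j x) (Tk u j y) < min (Tk u (j + 1) x) (Tk u (j + 1) y) := by
    intro x hx y hy hxy
    obtain ⟨t, h1, h2, -⟩ := (hD.2.2.2 x hx y hy hxy).1 (j + 1) (by omega) hj
    exact h1.trans h2
  simp only [max_lt_iff, lt_min_iff] at key
  rcases lt_trichotomy α α' with hlt | rfl | hlt
  · exact (key α hα α' hα' hlt).2.1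
  · have hmid : (α + (αs + δ₁)) / 2 ∈ Ioo (αs - δ₁) (αs + δ₁) :=
      ⟨by linarith [hα.1, hα.2], by linarith [hα.2]⟩
    exact (key α hα _ hmid (by linarith [hα.2])).1.1
  · exact (key α' hα' α hα hlt).1.2

lemma pos_of_mem_Nk {j : ℕ} (h : α ∈ Nk u j) : 0 < α := by
  induction j with
  | zero => exact h
  | succ j ih =>
    cases j with
    | zero => exact h.1
    | succ j => exact ih h.1

lemma mem_Gk (h : α ∈ Gk u k) : 0 < α ∧ uAtZ u k α = 0 ∧ duAtZ u k α = 0 := by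
  match k, h with
  | 1, h => exact h
  | j + 2, h => exact ⟨pos_of_mem_Nk h.1, h.2.2⟩

lemma RadialSol.exists_tendsto (h : RadialSol n f v w) (hT : 0 ≤ T)
    (hv : ∀ s, T < s → v s < 0) (hw : ∀ s, T < s → 0 < w s) :
    ∃ L, Tendsto v atTop (nhds L) := by
  have hmono : Monotone fun r => v (max r (T + 1)) := by
    intro x y hxy
    have hm := (h.strictMonoOn (d := max y (T + 1)) hT fun r hr => hw r hr.1).monotoneOn
    have h1 : T ≤ max x (T + 1) := le_max_of_le_right (by linarith)
    have h2 : max x (T + 1) ≤ max y (T + 1) := max_le_max_right _ hxy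
    exact hm ⟨h1, h2⟩ ⟨h1.trans h2, le_rfl⟩ h2
  have hbdd : BddAbove (range fun r => v (max r (T + 1))) := by
    refine ⟨0, ?_⟩
    rintro _ ⟨r, rfl⟩
    exact (hv _ (lt_max_of_lt_right (by linarith))).le
  refine ⟨_, (tendsto_atTop_ciSup hmono hbdd).congr' ?_⟩
  filter_upwards [eventually_ge_atTop (T + 1)] with r hr
  rw [max_eq_left hr]

lemma RadialSol.energy_pos_of_tendsto (hn : 2 ≤ n) (hf : Continuous f) (h : RadialSol n f v w)
    (hT : 0 ≤ T) (hw : ∀ s, T < s → w s ≠ 0) (hv : Tendsto v atTop (nhds 0)) :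
    0 < energy f v w T := by
  refine lt_of_le_of_lt ?_ (h.energy_lt hn hf hT (lt_add_one T) fun r hr => hw r hr.1)
  have hlim : Tendsto (fun r => 2 * Fint f (v r)) atTop (nhds 0) := by
    have := (((continuous_Fint hf).tendsto 0).comp hv).const_mul 2
    rwa [Fint_zero, mul_zero] at this
  refine le_of_tendsto hlim ?_
  filter_upwards [eventually_ge_atTop (T + 1)] with r hr
  have := h.energy_le hn hf (by linarith) hr
  unfold energy at this ⊢
  nlinarith [sq_nonneg (w r)]

/-- At its last critical point before decaying to rest, a solution has positive energy. -/
lemma energy_pos_of_mem_Gk (hn : 2 ≤ n) (hf : Continuous f) (hu : Family n f u) (hk : 1 ≤ k)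
    (h1 : Hf1 f b β) (hα : α ∈ Gk u k) {t : ℝ} (ht : Tk u (k - 1) α < t)
    (htZ : BddAbove (ZsetK u k α) → t < Zk u k α) :
    0 < energy f (u α) (deriv (u α)) (Tk u (k - 1) α) := by
  obtain ⟨hα0, hz, hdz⟩ := mem_Gk hα
  have h := radialSol_of_family hu hα0
  have hT := Tk_nonneg u (k - 1) α
  by_cases hbdd : BddAbove (ZsetK u k α)
  · rw [uAtZ, if_pos hbdd] at hz
    rw [duAtZ, if_pos hbdd] at hdz
    have hZ : Zk u k α = sSup (ZsetK u k α) := by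
      obtain ⟨j, rfl⟩ : ∃ j, k = j + 1 := ⟨k - 1, by omega⟩
      rfl
    have htZ := htZ hbdd
    have hne : (ZsetK u k α).Nonempty := by
      by_contra hcon
      rw [not_nonempty_iff_eq_empty.1 hcon, Real.sSup_empty] at hZ
      linarith
    obtain ⟨r, hr⟩ := hne
    have hrZ : r ≤ Zk u k α := hZ ▸ le_csSup hbdd hr
    have hlt := h.energy_lt hn hf hT hr.1 fun s hs => right_ne_zero_of_mul (hr.2 s hs).2.ne'
    have hle := h.energy_le hn hf (hT.trans hr.1.le) hrZ
    have hE : energy f (u α) (deriv (u α)) (Zk u k α) = 0 := by simp [energy, hz, hdz, Fint_zero]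
    linarith
  · rw [uAtZ, if_neg hbdd] at hz
    have hσ := neg_one_pow_eq_or ℝ k
    have hprop : ∀ s, Tk u (k - 1) α < s →
        (-1 : ℝ) ^ k * u α s < 0 ∧ 0 < (-1 : ℝ) ^ k * deriv (u α) s := by
      intro s hs
      rw [bddAbove_def] at hbdd
      push Not at hbdd
      obtain ⟨y, hy, hsy⟩ := hbdd s
      exact hy.2 s ⟨hs, hsy⟩
    obtain ⟨L, hL⟩ := (h.sign_mul h1 hσ).exists_tendsto hT (fun s hs => (hprop s hs).1)
      fun s hs => (hprop s hs).2
    have hL' : Tendsto (u α) atTop (nhds ((-1) ^ k * L)) := by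
      refine (hL.const_mul ((-1) ^ k)).congr fun r => ?_
      rw [← mul_assoc, ← pow_add, Even.neg_one_pow ⟨k, rfl⟩, one_mul]
    rw [hL'.limUnder_eq] at hz
    exact h.energy_pos_of_tendsto hn hf hT (fun s hs => right_ne_zero_of_mul (hprop s hs).2.ne')
      (hz ▸ hL')

end CriticalPoints

/-! ### Decreasing branches of radial solutions -/

section DecreasingBranch

variable {n : ℕ} {f v ρ H : ℝ → ℝ} {L R : ℝ}

lemma RadialSol.strictAntiOn {w : ℝ → ℝ} (h : RadialSol n f v w) (hL : 0 ≤ L)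
    (hw : ∀ r ∈ Ioo L R, w r < 0) : StrictAntiOn v (Icc L R) := by
  refine strictAntiOn_of_deriv_neg (convex_Icc L R) (h.cont.mono fun r hr => hL.trans hr.1) ?_
  rw [interior_Icc]
  intro r hr
  rw [(h.hasDerivAt r (hL.trans_lt hr.1)).deriv]
  exact hw r hr

lemma InvBranch_apply (hv : StrictAntiOn v (Icc L R)) (hρ : InvBranch v ρ L R (v R) (v L)) {t : ℝ}
    (ht : t ∈ Icc L R) : ρ (v t) = t := by
  have hLR := ht.1.trans ht.2
  have hmem : v t ∈ Icc (v R) (v L) :=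
    ⟨hv.antitoneOn ht ⟨hLR, le_rfl⟩ ht.2, hv.antitoneOn ⟨le_rfl, hLR⟩ ht ht.1⟩
  exact hv.injOn (hρ.1 _ hmem).1 ht (hρ.1 _ hmem).2

lemma InvBranch_continuousOn (hc : ContinuousOn v (Icc L R)) (hv : StrictAntiOn v (Icc L R))
    (hρ : InvBranch v ρ L R (v R) (v L)) : ContinuousOn ρ (Icc (v R) (v L)) := by
  refine continuousOn_iff_isClosed.2 fun C hC => ⟨v '' (C ∩ Icc L R), ?_, ?_⟩
  · exact ((isCompact_Icc.inter_left hC).image_of_continuousOn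
      (hc.mono inter_subset_right)).isClosed
  · ext s
    refine and_congr_left fun hs => ⟨fun h => ⟨ρ s, ⟨h, (hρ.1 s hs).1⟩, (hρ.1 s hs).2⟩, ?_⟩
    rintro ⟨t, ⟨htC, ht⟩, rfl⟩
    rwa [mem_preimage, InvBranch_apply hv hρ ht]

/-- A decreasing piece of a solution between two critical points, with positive final energy,
is a branch. -/
lemma RadialSol.branch (hn : 2 ≤ n) (hf : Continuous f) (h : RadialSol n f v (deriv v))
    (hL : 0 ≤ L) (hLR : L < R) (hvL : deriv v L = 0) (hvR : deriv v R = 0)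
    (hneg : ∀ r ∈ Ioo L R, deriv v r < 0) (hE : 0 < energy f v (deriv v) R)
    (hρ : InvBranch v ρ L R (v R) (v L)) :
    Branch n f ρ (fun s => deriv v (ρ s)) (v R) (v L) := by
  have hanti := h.strictAntiOn hL hneg
  have hsub : Icc L R ⊆ Ici 0 := fun r hr => hL.trans hr.1
  have hcont := InvBranch_continuousOn (h.cont.mono hsub) hanti hρ
  have hIoo : ∀ s ∈ Ioo (v R) (v L), ρ s ∈ Ioo L R := by
    intro s hs
    obtain ⟨hmem, hvs⟩ := hρ.1 s (Ioo_subset_Icc_self hs)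
    refine ⟨lt_of_le_of_ne hmem.1 fun he => ?_, lt_of_le_of_ne hmem.2 fun he => ?_⟩
    · rw [← he] at hvs
      exact hs.2.ne hvs.symm
    · rw [he] at hvs
      exact hs.1.ne hvs
  have hpos : ∀ s ∈ Ioo (v R) (v L), 0 < ρ s := fun s hs => hL.trans_lt (hIoo s hs).1
  refine ⟨hcont, (h.cont_deriv.mono hsub).comp hcont fun s hs => (hρ.1 s hs).1,
    fun s hs => hsub (hρ.1 s hs).1, hpos, fun s hs => hneg _ (hIoo s hs), ?_, ?_, hρ.2,
    fun s hs => ?_, fun s hs => ?_⟩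
  · rwa [InvBranch_apply hanti hρ ⟨hLR.le, le_rfl⟩]
  · rwa [InvBranch_apply hanti hρ ⟨le_rfl, hLR.le⟩]
  · have hne := (hneg _ (hIoo s hs)).ne
    have hρ0 := (hpos s hs).ne'
    refine ((h.hasDerivAt_deriv _ (hpos s hs)).comp s (hρ.2 s hs)).congr_deriv ?_
    rw [(hρ.1 s (Ioo_subset_Icc_self hs)).2]
    field_simp
  · have hle := h.energy_le hn hf (hpos s hs).le (hIoo s hs).2.le
    rw [energy, energy, (hρ.1 s (Ioo_subset_Icc_self hs)).2] at hle
    exact hE.trans_le hle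

/-- At a critical value, both expressions of the functional `Q` agree. -/
lemma Qfun_eq_Qred {m M s : ℝ} (hmM : m < M) (hs : s ∈ Icc m M)
    (hv : ∀ r, 0 < r → DifferentiableAt ℝ v r) (hinv : ∀ x ∈ Icc m M, v (ρ x) = x)
    (hρ : 0 ≤ ρ s) (h0 : deriv v (ρ s) = 0) :
    Qfun f H ρ s = Qred f H ρ (fun x => deriv v (ρ x)) s := by
  have key : ρ s = 0 ∨ deriv ρ s = 0 := by
    by_contra! hcon
    have hd := (hv (ρ s) (hρ.lt_of_ne' hcon.1)).hasDerivAt.comp s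
      (differentiableAt_of_deriv_ne_zero hcon.2).hasDerivAt
    have hid : HasDerivWithinAt (v ∘ ρ) 1 (Icc m M) s :=
      (hasDerivWithinAt_id s (Icc m M)).congr hinv (hinv s hs)
    have := (uniqueDiffOn_Icc hmM s hs).eq_deriv _ hd.hasDerivWithinAt hid
    rw [h0, zero_mul] at this
    exact zero_ne_one this
  rcases key with h | h <;> simp [Qfun, Qred, h0, h]

end DecreasingBranch

/-! ### Oscillation of the solutions with initial value near `α*` -/

section Oscillation

variable {n k : ℕ} {f : ℝ → ℝ} {u : ℝ → ℝ → ℝ} {b β α αs a δ₁ : ℝ}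

lemma lt_initial_value (hn : 2 ≤ n) (hf : Continuous f) (h1 : Hf1 f b β) (hu : Family n f u)
    (hα : 0 < α) {R : ℝ} (hR : 0 ≤ R) (hE : 0 < energy f (u α) (deriv (u α)) R) :
    β < u α 0 := by
  have h := radialSol_of_family hu hα
  have hu0 : u α 0 = α := (hu.1 α hα).1
  have hE0 := hE.trans_le (h.energy_le hn hf le_rfl hR)
  rw [energy, h.deriv_zero] at hE0
  exact lt_of_Fint_pos hf h1 (hα.le.trans_eq hu0.symm) (by linarith)

lemma Tk_le_Tk_last (hD : DeltaOneLemma f β u k αs a δ₁) {j : ℕ} (hj : j ≤ k - 1) :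
    Tk u j αs ≤ Tk u (k - 1) αs := by
  have hmem : αs ∈ Ioo (αs - δ₁) (αs + δ₁) := ⟨by linarith [hD.2.1], by linarith [hD.2.1]⟩
  induction hj using Nat.decreasingInduction with
  | self => exact le_rfl
  | of_succ j hj ih => exact (Tk_lt_Tk_succ hD hmem hmem hj).le.trans ih

lemma beta_lt_last (hn : 2 ≤ n) (hf : Continuous f) (h1 : Hf1 f b β) (hu : Family n f u)
    (hk : 2 ≤ k) (hαs : αs ∈ Gk u k) (hD : DeltaOneLemma f β u k αs a δ₁) :
    β < (-1) ^ (k - 1) * u αs (Tk u (k - 1) αs) := by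
  have hδ := hD.2.1
  have hmem : αs ∈ Ioo (αs - δ₁) (αs + δ₁) := ⟨by linarith, by linarith⟩
  obtain ⟨t, ht, htZ, -⟩ := (hD.2.2.2 αs hmem (αs + δ₁ / 2) ⟨by linarith, by linarith⟩
    (by linarith)).2
  have hE := energy_pos_of_mem_Gk hn hf hu (by omega) h1 hαs ht htZ
  have hα0 := (mem_Gk hαs).1
  exact (Tk_spec hn hf h1 (radialSol_of_family hu hα0)
    (lt_initial_value hn hf h1 hu hα0 (Tk_nonneg u _ _) hE) hE
    (fun j hj => ⟨Tk_lt_Tk_succ hD hmem hmem hj, Or.inl (Tk_le_Tk_last hD hj)⟩) (k - 1) le_rfl).2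

lemma Tk_spec_of_beta_lt (hn : 2 ≤ n) (hf : Continuous f) (h1 : Hf1 f b β) (hu : Family n f u)
    (hD : DeltaOneLemma f β u k αs a δ₁) (hα : α ∈ Ioo (αs - δ₁) (αs + δ₁)) (hα0 : 0 < α)
    (hβ : β < (-1) ^ (k - 1) * u α (Tk u (k - 1) αs)) {j : ℕ} (hj : j + 1 ≤ k - 1) :
    deriv (u α) (Tk u j α) = 0 ∧ β < (-1) ^ j * u α (Tk u j α) ∧
    deriv (u α) (Tk u (j + 1) α) = 0 ∧ β < (-1) ^ (j + 1) * u α (Tk u (j + 1) α) ∧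
      ∀ r ∈ Ioo (Tk u j α) (Tk u (j + 1) α), 0 < (-1) ^ (j + 1) * deriv (u α) r := by
  have hδ := hD.2.1
  have hmem : αs ∈ Ioo (αs - δ₁) (αs + δ₁) := ⟨by linarith, by linarith⟩
  have h := radialSol_of_family hu hα0
  have hE : 0 < energy f (u α) (deriv (u α)) (Tk u (k - 1) αs) := by
    have hF : 0 < Fint f (u α (Tk u (k - 1) αs)) := by
      rcases neg_one_pow_eq_or ℝ (k - 1) with hσ | hσ <;> rw [hσ] at hβ
      · exact Fint_pos_of_lt hf h1 (by linarith)
      · exact Fint_pos_of_lt_neg hf h1 (by linarith)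
    unfold energy
    positivity
  have hstep : ∀ j < k - 1, Tk u j α < Tk u (j + 1) α ∧ (Tk u (j + 1) α ≤ Tk u (k - 1) αs ∨
      Tk u j α < Tk u (k - 1) αs ∧ β < (-1) ^ (j + 1) * u α (Tk u (k - 1) αs)) := by
    intro j hj
    refine ⟨Tk_lt_Tk_succ hD hα hα hj, ?_⟩
    rcases (Nat.succ_le_of_lt hj).eq_or_lt with he | hlt
    · have he' : j + 1 = k - 1 := he
      have := Tk_lt_Tk_succ hD hα hmem hj
      rw [he'] at this ⊢
      exact Or.inr ⟨this, hβ⟩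
    · exact Or.inl ((Tk_lt_Tk_succ hD hα hmem hlt).le.trans (Tk_le_Tk_last hD hlt))
  obtain ⟨h0, hβ0⟩ := Tk_spec hn hf h1 h
    (lt_initial_value hn hf h1 hu hα0 (Tk_nonneg u _ _) hE) hE hstep j (by omega)
  obtain ⟨hlt, halt⟩ := hstep j hj
  exact ⟨h0, hβ0, Tk_succ_spec hn hf h1 h h0 hβ0 hlt hE halt⟩

lemma exists_radius (hn : 2 ≤ n) (hf : Continuous f) (h1 : Hf1 f b β) (hu : Family n f u)
    (hk : 2 ≤ k) (hαs : αs ∈ Gk u k) (hD : DeltaOneLemma f β u k αs a δ₁) :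
    ∃ δ, 0 < δ ∧ δ < δ₁ ∧ ∀ α ∈ Ioo (αs - δ) (αs + δ),
      0 < α ∧ β < (-1) ^ (k - 1) * u α (Tk u (k - 1) αs) := by
  have hα0 := (mem_Gk hαs).1
  have hδ := hD.2.1
  have hcont : ContinuousAt (fun α => (-1) ^ (k - 1) * u α (Tk u (k - 1) αs)) αs := by
    refine continuousAt_const.mul (ContinuousOn.continuousAt (s := Ioi 0) ?_ (Ioi_mem_nhds hα0))
    exact hu.2.1.comp (f := fun α : ℝ => (α, Tk u (k - 1) αs)) (by fun_prop)
      fun α hα => ⟨hα, Tk_nonneg u _ _⟩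
  have hev : ∀ᶠ α in nhds αs, 0 < α ∧ β < (-1) ^ (k - 1) * u α (Tk u (k - 1) αs) :=
    (lt_mem_nhds hα0).and (hcont.eventually_const_lt (beta_lt_last hn hf h1 hu hk hαs hD))
  obtain ⟨ε, hε, hball⟩ := Metric.eventually_nhds_iff.1 hev
  refine ⟨min ε (δ₁ / 2), lt_min hε (by linarith), (min_le_right _ _).trans_lt (by linarith),
    fun α hα => hball ?_⟩
  have := min_le_left ε (δ₁ / 2)
  rw [Real.dist_eq, abs_lt]
  exact ⟨by linarith [hα.1], by linarith [hα.2]⟩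

end Oscillation

/-- **Proposition 4.2.** Under (f1), (f2), (f4'): comparison of the `Q` functional at the
`i`-th consecutive local maximum and minimum values. The `i`-th maximum (resp. minimum)
point of `u_j` is `T_{2i-2}(α_j)` (resp. `T_{2i-1}(α_j)`), and `ρ_j` is the inverse of
`u_j` on the decreasing branch joining them; `H' = -4(n-2) F/f`. -/
theorem Q_max_min_comparison
    (n : ℕ) (hn : 2 ≤ n)
    (f : ℝ → ℝ) (b β : ℝ) (hf : Continuous f)
    (h1 : Hf1 f b β) (h2 : Hf2 f) (h4 : Hf4' n f β)
    (u : ℝ → ℝ → ℝ) (hu : Family n f u)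
    (k : ℕ) (hk : 1 ≤ k) (αs : ℝ) (hαs : αs ∈ Gk u k)
    (a δ₁ : ℝ) (hδ₁ : DeltaOneLemma f β u k αs a δ₁)
    (i : ℕ) (hi : 1 ≤ i) (hik : 2 * i ≤ k)
    (H : ℝ → ℝ)
    (hH : ∀ s : ℝ, f s ≠ 0 → HasDerivAt H (-4 * ((n : ℝ) - 2) * (Fint f s / f s)) s) :
    ∃ δ : ℝ, 0 < δ ∧ δ < δ₁ ∧
      ∀ α₁ ∈ Ioo (αs - δ) (αs + δ), ∀ α₂ ∈ Ioo (αs - δ) (αs + δ), α₁ < α₂ →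
        ∀ ρ₁ ρ₂ : ℝ → ℝ,
          InvBranch (u α₁) ρ₁ (Tk u (2 * i - 2) α₁) (Tk u (2 * i - 1) α₁)
            (u α₁ (Tk u (2 * i - 1) α₁)) (u α₁ (Tk u (2 * i - 2) α₁)) →
          InvBranch (u α₂) ρ₂ (Tk u (2 * i - 2) α₂) (Tk u (2 * i - 1) α₂)
            (u α₂ (Tk u (2 * i - 1) α₂)) (u α₂ (Tk u (2 * i - 2) α₂)) →
          u α₁ (Tk u (2 * i - 2) α₁) < u α₂ (Tk u (2 * i - 2) α₂) →
          Qfun f H ρ₂ (u α₂ (Tk u (2 * i - 2) α₂)) <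
            Qfun f H ρ₁ (u α₁ (Tk u (2 * i - 2) α₁)) →
          u α₂ (Tk u (2 * i - 1) α₂) < u α₁ (Tk u (2 * i - 1) α₁) ∧
            Qfun f H ρ₂ (u α₂ (Tk u (2 * i - 1) α₂)) <
              Qfun f H ρ₁ (u α₁ (Tk u (2 * i - 1) α₁)) := by
  obtain ⟨δ, hδ0, hδ, hprop⟩ := exists_radius hn hf h1 hu (by omega) hαs hδ₁
  refine ⟨δ, hδ0, hδ, fun α₁ hα₁ α₂ hα₂ hα ρ₁ ρ₂ hρ₁ hρ₂ hM hQ => ?_⟩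
  obtain ⟨j, rfl⟩ : ∃ j, i = j + 1 := ⟨i - 1, by omega⟩
  rw [show 2 * (j + 1) - 2 = 2 * j by omega] at hρ₁ hρ₂ hM hQ
  rw [show 2 * (j + 1) - 1 = 2 * j + 1 by omega] at hρ₁ hρ₂ ⊢
  have hsub : ∀ α ∈ Ioo (αs - δ) (αs + δ), α ∈ Ioo (αs - δ₁) (αs + δ₁) := fun α h =>
    ⟨by linarith [h.1], by linarith [h.2]⟩
  obtain ⟨t, hmax, hmin, htu⟩ := (hδ₁.2.2.2 α₁ (hsub _ hα₁) α₂ (hsub _ hα₂) hα).1 (2 * j + 1)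
    (by omega) (by omega)
  rw [Nat.add_sub_cancel, max_lt_iff] at hmax
  rw [lt_min_iff] at hmin
  have branch : ∀ α ∈ Ioo (αs - δ) (αs + δ), ∀ ρ,
      InvBranch (u α) ρ (Tk u (2 * j) α) (Tk u (2 * j + 1) α) (u α (Tk u (2 * j + 1) α))
        (u α (Tk u (2 * j) α)) → t ∈ Ioo (Tk u (2 * j) α) (Tk u (2 * j + 1) α) →
      ∃ p, Branch n f ρ p (u α (Tk u (2 * j + 1) α)) (u α (Tk u (2 * j) α)) ∧
        β < u α (Tk u (2 * j) α) ∧ u α (Tk u (2 * j + 1) α) < -β ∧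
        Qfun f H ρ (u α (Tk u (2 * j) α)) = Qred f H ρ p (u α (Tk u (2 * j) α)) ∧
        Qfun f H ρ (u α (Tk u (2 * j + 1) α)) = Qred f H ρ p (u α (Tk u (2 * j + 1) α)) ∧
        u α t ∈ Ioo (u α (Tk u (2 * j + 1) α)) (u α (Tk u (2 * j) α)) ∧ ρ (u α t) = t := by
    intro α hα ρ hρ ht
    obtain ⟨hα0, hβ⟩ := hprop α hα
    have h := radialSol_of_family hu hα0
    obtain ⟨h0, hM, h0', hm, hneg⟩ := Tk_spec_of_beta_lt hn hf h1 hu hδ₁ (hsub α hα) hα0 hβ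
      (j := 2 * j) (by omega)
    have hpow : (-1 : ℝ) ^ (2 * j) = 1 := Even.neg_one_pow ⟨j, by ring⟩
    simp only [pow_succ, hpow, one_mul, neg_one_mul, Left.neg_pos_iff] at hM hm hneg
    have hlt := ht.1.trans ht.2
    have hT := Tk_nonneg u (2 * j) α
    have hanti := h.strictAntiOn hT hneg
    have hE : 0 < energy f (u α) (deriv (u α)) (Tk u (2 * j + 1) α) := by
      have := Fint_pos_of_lt_neg hf h1 (s := u α (Tk u (2 * j + 1) α)) (by linarith)
      unfold energy
      positivity
    have hB := h.branch hn hf hT hlt h0 h0' hneg hE hρ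
    have hmM := hanti ⟨le_rfl, hlt.le⟩ ⟨hlt.le, le_rfl⟩ hlt
    have hQ : ∀ s ∈ Icc (u α (Tk u (2 * j + 1) α)) (u α (Tk u (2 * j) α)),
        deriv (u α) (ρ s) = 0 → Qfun f H ρ s = Qred f H ρ (fun s => deriv (u α) (ρ s)) s :=
      fun s hs => Qfun_eq_Qred hmM hs (fun r hr => (h.hasDerivAt r hr).differentiableAt)
        (fun x hx => (hρ.1 x hx).2) (hB.r_nonneg s hs)
    exact ⟨_, hB, hM, by linarith, hQ _ ⟨hmM.le, le_rfl⟩ hB.p_right,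
      hQ _ ⟨le_rfl, hmM.le⟩ hB.p_left,
      ⟨hanti (Ioo_subset_Icc_self ht) ⟨hlt.le, le_rfl⟩ ht.2,
        hanti ⟨le_rfl, hlt.le⟩ (Ioo_subset_Icc_self ht) ht.1⟩,
      InvBranch_apply hanti hρ (Ioo_subset_Icc_self ht)⟩
  obtain ⟨p₁, B₁, hM₁, hm₁, hQM₁, hQm₁, hc₁, hr₁⟩ := branch α₁ hα₁ ρ₁ hρ₁ ⟨hmax.1, hmin.1⟩
  obtain ⟨p₂, B₂, hM₂, hm₂, hQM₂, hQm₂, hc₂, hr₂⟩ := branch α₂ hα₂ ρ₂ hρ₂ ⟨hmax.2, hmin.2⟩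
  rw [hQM₁, hQM₂] at hQ
  rw [hQm₁, hQm₂]
  exact B₁.comparison hn hf h1 h2 h4 hH B₂ hm₁ hm₂ hM₁ hM hQ hc₁ (htu ▸ hc₂)
    (by rw [hr₁, htu, hr₂])
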